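/- arXiv:math/0612668 — 5 statements merged into one kernel-verified Lean document; each statement's English description precedes it below -/
import Mathlib

section
/- Let G be a finite group, g ≥ 0 an integer, and z ∈ G. Then the number of 2g-tuples (x_1,y_1,…,x_g,y_g) ∈ G^{2g} satisfying [x_1,y_1][x_2,y_2]⋯[x_g,y_g]·z = 1 equals Σ_χ (|G|/χ(1))^{2g−1} · χ(z), where the sum is over the irreducible complex characters χ of G. -/
open CategoryTheory

theorem aux_schur {G : Type} [Group G] (V : FDRep ℂ G) (hV : Simple V)
    (f : V →ₗ[ℂ] V) (hf : ∀ g, f * V.ρ g = V.ρ g * f) :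
    ∃ c : ℂ, f = c • LinearMap.id := by
  let F : V ⟶ V := ⟨InducedCategory.homMk (ModuleCat.ofHom f), fun g ↦ by
    ext1
    ext x
    exact LinearMap.congr_fun (hf g) x⟩
  have h1 : Module.finrank ℂ (V ⟶ V) = 1 := finrank_endomorphism_simple_eq_one ℂ V
  have h2 := (finrank_eq_one_iff_of_nonzero' (𝟙 V) (id_nonzero V)).mp h1 F
  obtain ⟨c, hc⟩ := h2
  refine ⟨c, ?_⟩
  have := congrArg (fun F : V ⟶ V => F.hom.hom.hom) hc
  exact this.symm

theorem aux_scalar {G : Type} [Group G] (V : FDRep ℂ G) (hV : Simple V)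
    (f : V →ₗ[ℂ] V) (hf : ∀ g, f * V.ρ g = V.ρ g * f) :
    V.character 1 • f = LinearMap.trace ℂ V f • LinearMap.id := by
  obtain ⟨c, rfl⟩ := aux_schur V hV f hf
  rw [FDRep.char_one, map_smul, LinearMap.trace_id, smul_smul, smul_eq_mul, mul_comm]

theorem aux_dim_ne {G : Type} [Group G] [Fintype G] (V : FDRep ℂ G) (hV : Simple V) :
    V.character 1 ≠ 0 := by
  intro h
  have hn := (FDRep.simple_iff_char_is_norm_one V).1 hV
  rw [FDRep.char_one] at h
  have h0 : Module.finrank ℂ V = 0 := by exact_mod_cast h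
  have hs : Subsingleton V := Module.finrank_zero_iff.1 h0
  have : ∀ g, V.character g = 0 := fun g => by
    have : V.ρ g = 0 := Subsingleton.elim _ _
    rw [FDRep.character, this, map_zero]
  simp only [this, mul_zero, Finset.sum_const_zero] at hn
  exact NeZero.ne (Nat.card G : ℂ) hn.symm

/-- Regular representation as matrices. -/
noncomputable def auxReg (G : Type) [Group G] [Fintype G] : FDRep ℂ G :=
  FDRep.of (Representation.leftRegular ℂ G)

theorem aux_reg_char (G : Type) [Group G] [Fintype G] [DecidableEq G] (w : G) :
    (auxReg G).character w = if w = 1 then (Fintype.card G : ℂ) else 0 := by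
  change LinearMap.trace ℂ _ (Representation.leftRegular ℂ G w) = _
  let b : Module.Basis G ℂ (MonoidAlgebra ℂ G) := ⟨MonoidAlgebra.coeffLinearEquiv ℂ⟩
  have hb : ∀ x, b x = MonoidAlgebra.single x 1 := fun x => rfl
  have hr : ∀ m x, b.repr m x = m.coeff x := fun m x => rfl
  rw [LinearMap.trace_eq_matrix_trace ℂ b, Matrix.trace]
  simp only [Matrix.diag, LinearMap.toMatrix_apply, hb, hr, Representation.ofMulAction_single]
  by_cases h : w = 1
  · subst h; simp
  · simp [h, MonoidAlgebra.coeff_single]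

theorem aux_simple {G : Type} [Group G] [Fintype G] {W : Type} [AddCommGroup W] [Module ℂ W]
    [FiniteDimensional ℂ W] (ρ : Representation ℂ G W) (h : ρ.IsIrreducible) :
    Simple (FDRep.of ρ) := by
  rw [FDRep.simple_iff_char_is_norm_one]
  have := invertibleOfNonzero (NeZero.ne (Nat.card G : ℂ))
  have := Representation.char_orthonormal ρ ρ
  rw [if_pos ⟨Representation.Equiv.refl ρ⟩, inv_mul_eq_one₀ (NeZero.ne _)] at this
  exact this.symm

theorem aux_decomp {G : Type} [Group G] [Fintype G]
    (ι : Type) [Fintype ι] (V : ι → FDRep ℂ G)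
    (hcomplete : ∀ W : FDRep ℂ G, Simple W → ∃ i, Nonempty (W ≅ V i)) :
    ∀ (n : ℕ) (W : Type) [AddCommGroup W] [Module ℂ W]
    [FiniteDimensional ℂ W] (ρ : Representation ℂ G W), Module.finrank ℂ W = n →
    ∃ m : ι → ℂ, ∀ g, ρ.character g = ∑ i, m i * (V i).character g := by
  classical
  intro n
  induction n using Nat.strong_induction_on with
  | _ n ih =>
  intro W _ _ _ ρ hn
  by_cases hirr : ρ.IsIrreducible
  · obtain ⟨i, ⟨e⟩⟩ := hcomplete _ (aux_simple ρ hirr)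
    refine ⟨Pi.single i 1, fun g => ?_⟩
    have := congrFun (FDRep.char_iso e) g
    simp only [Pi.single_apply, ite_mul, one_mul, zero_mul, Finset.sum_ite_eq', Finset.mem_univ,
      if_true]
    exact this
  by_cases hs : Subsingleton W
  · refine ⟨0, fun g => ?_⟩
    have : ρ g = 0 := Subsingleton.elim _ _
    simp [Representation.character, this]
  have hnt : Nontrivial W := not_subsingleton_iff_nontrivial.1 hs
  have : ∃ p : Subrepresentation ρ, p ≠ ⊥ ∧ p ≠ ⊤ := by
    by_contra! hcon
    apply hirr
    have : Nontrivial (Subrepresentation ρ) := ⟨⊥, ⊤, fun h => by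
      have := congrArg Subrepresentation.toSubmodule h
      exact bot_ne_top (α := Submodule ℂ W) this⟩
    exact { eq_bot_or_eq_top := fun a => by
              by_cases h : a = ⊥
              · exact Or.inl h
              · exact Or.inr (hcon a h) }
  obtain ⟨p, hp0, hp1⟩ := this
  obtain ⟨q, hpq⟩ := exists_isCompl p
  have hc : IsCompl p.toSubmodule q.toSubmodule := by
    constructor
    · rw [disjoint_iff]
      exact congrArg Subrepresentation.toSubmodule hpq.inf_eq_bot
    · rw [codisjoint_iff]
      exact congrArg Subrepresentation.toSubmodule hpq.sup_eq_top
  have hadd := Submodule.finrank_add_eq_of_isCompl hc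
  have hp : p.toSubmodule ≠ ⊥ := fun h => hp0 (Subrepresentation.toSubmodule_injective h)
  have hpt : p.toSubmodule ≠ ⊤ := fun h => hp1 (Subrepresentation.toSubmodule_injective h)
  have hpn := Submodule.finrank_lt (lt_top_iff_ne_top.2 hpt).ne
  have hp0' : Module.finrank ℂ p.toSubmodule ≠ 0 := fun h => hp (Submodule.finrank_eq_zero.1 h)
  obtain ⟨m1, h1⟩ := ih _ (by omega) p.toSubmodule p.toRepresentation rfl
  obtain ⟨m2, h2⟩ := ih _ (by omega) q.toSubmodule q.toRepresentation rfl
  refine ⟨m1 + m2, fun g => ?_⟩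
  have htr : ρ.character g = p.toRepresentation.character g + q.toRepresentation.character g := by
    let N : Bool → Submodule ℂ W := fun b => if b then p.toSubmodule else q.toSubmodule
    have hN : DirectSum.IsInternal N := by
      rw [DirectSum.isInternal_submodule_iff_isCompl N (i := true) (j := false) (by simp)
        (by ext x; cases x <;> simp)]
      exact hc
    have hf : ∀ i, Set.MapsTo (ρ g) (N i) (N i) := by
      rintro (_ | _)
      · exact q.apply_mem_toSubmodule g
      · exact p.apply_mem_toSubmodule g
    have := LinearMap.trace_eq_sum_trace_restrict hN hf
    rw [Fintype.sum_bool] at this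
    exact this
  rw [htr, h1, h2, ← Finset.sum_add_distrib]
  simp [add_mul]

theorem aux_reg_sum {G : Type} [Group G] [Fintype G] [DecidableEq G]
    (ι : Type) [Fintype ι] (V : ι → FDRep ℂ G)
    (hsimple : ∀ i, Simple (V i))
    (hdistinct : ∀ i j, i ≠ j → ¬ Nonempty (V i ≅ V j))
    (hcomplete : ∀ W : FDRep ℂ G, Simple W → ∃ i, Nonempty (W ≅ V i)) (w : G) :
    ∑ i, (V i).character 1 * (V i).character w = if w = 1 then (Fintype.card G : ℂ) else 0 := by
  classical
  have := invertibleOfNonzero (NeZero.ne (Nat.card G : ℂ))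
  obtain ⟨m, hm⟩ := aux_decomp ι V hcomplete _ _ (Representation.leftRegular ℂ G) rfl
  have hr : ∀ g, ∑ i, m i * (V i).character g = if g = 1 then (Fintype.card G : ℂ) else 0 :=
    fun g => (hm g).symm.trans (aux_reg_char G g)
  rw [← hr w]
  refine Finset.sum_congr rfl fun i _ => ?_
  congr 1
  have e1 : (Nat.card G : ℂ)⁻¹ * ∑ g, (∑ j, m j * (V j).character g) * (V i).character g⁻¹ = m i := by
    simp_rw [Finset.sum_mul]
    rw [Finset.sum_comm, Finset.mul_sum]
    have : ∀ j, (Nat.card G : ℂ)⁻¹ * ∑ g, m j * (V j).character g * (V i).character g⁻¹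
        = if j = i then m j else 0 := by
      intro j
      have := FDRep.char_orthonormal (V j) (V i)
      simp_rw [mul_assoc, ← Finset.mul_sum]
      rw [mul_left_comm, this]
      by_cases h : j = i
      · subst h
        rw [if_pos ⟨Iso.refl _⟩]; simp
      · rw [if_neg (hdistinct j i h)]; simp [h]
    simp only [this, Finset.sum_ite_eq', Finset.mem_univ, if_true]
  rw [← e1]
  simp_rw [hr]
  have h0 : (Fintype.card G : ℂ) ≠ 0 := by simp
  simp only [ite_mul, zero_mul, Finset.sum_ite_eq', Finset.mem_univ, if_true, inv_one,
    Nat.card_eq_fintype_card]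
  rw [inv_mul_cancel_left₀ h0]

theorem aux_comm {G : Type} [Group G] [Fintype G] (V : FDRep ℂ G) (hV : Simple V) :
    ∑ x : G, ∑ y : G, V.ρ (x * y * x⁻¹ * y⁻¹) =
      (((Fintype.card G : ℂ) / V.character 1) ^ 2) • (1 : V →ₗ[ℂ] V) := by
  have hd := aux_dim_ne V hV
  set d := V.character 1 with hdd
  have hA : ∀ x : G, ∑ y : G, V.ρ (y * x⁻¹ * y⁻¹) =
      ((Fintype.card G : ℂ) / d * V.character x⁻¹) • (1 : V →ₗ[ℂ] V) := by
    intro x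
    have := aux_scalar V hV (∑ y : G, V.ρ (y * x⁻¹ * y⁻¹)) (fun g => by
      rw [Finset.sum_mul, Finset.mul_sum]
      refine Fintype.sum_equiv (Equiv.mulLeft g⁻¹) _ _ fun y => ?_
      rw [← map_mul, ← map_mul]
      congr 1
      simp [mul_assoc])
    have ht : LinearMap.trace ℂ V (∑ y : G, V.ρ (y * x⁻¹ * y⁻¹)) =
        Fintype.card G * V.character x⁻¹ := by
      rw [map_sum]
      have : ∀ y, LinearMap.trace ℂ V (V.ρ (y * x⁻¹ * y⁻¹)) = V.character x⁻¹ :=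
        fun y => V.char_conj x⁻¹ y
      simp only [this, Finset.sum_const, Finset.card_univ, nsmul_eq_mul]
    rw [ht] at this
    rw [← hdd] at this
    rw [← inv_smul_smul₀ hd (∑ y : G, V.ρ (y * x⁻¹ * y⁻¹)), this, smul_smul]
    congr 1
    field_simp
  have hB : ∑ x : G, V.character x⁻¹ • V.ρ x =
      ((Fintype.card G : ℂ) / d) • (1 : V →ₗ[ℂ] V) := by
    have := aux_scalar V hV (∑ x : G, V.character x⁻¹ • V.ρ x) (fun g => by
      rw [Finset.sum_mul, Finset.mul_sum]
      refine Fintype.sum_equiv (MulAut.conj g⁻¹).toEquiv _ _ fun y => ?_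
      simp only [smul_mul_assoc, mul_smul_comm]
      rw [← map_mul, ← map_mul]
      have h1 : V.character ((MulAut.conj g⁻¹).toEquiv y)⁻¹ = V.character y⁻¹ := by
        rw [← V.char_conj y⁻¹ g⁻¹]
        congr 1
        simp [mul_assoc]
      rw [h1]
      congr 2
      simp [mul_assoc])
    have ht : LinearMap.trace ℂ V (∑ x : G, V.character x⁻¹ • V.ρ x) = Fintype.card G := by
      rw [map_sum]
      have := (FDRep.simple_iff_char_is_norm_one V).1 hV
      rw [Nat.card_eq_fintype_card] at this
      rw [← this]
      refine Finset.sum_congr rfl fun x _ => ?_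
      rw [map_smul, smul_eq_mul, mul_comm]; rfl
    rw [ht, ← hdd] at this
    rw [← inv_smul_smul₀ hd (∑ x : G, V.character x⁻¹ • V.ρ x), this, smul_smul]
    congr 1
    field_simp
  have : ∀ x : G, ∑ y : G, V.ρ (x * y * x⁻¹ * y⁻¹) =
      ((Fintype.card G : ℂ) / d) • (V.character x⁻¹ • V.ρ x) := by
    intro x
    have h : ∀ y, V.ρ (x * y * x⁻¹ * y⁻¹) = V.ρ x * V.ρ (y * x⁻¹ * y⁻¹) := fun y => by
      rw [← map_mul]; simp [mul_assoc]
    simp_rw [h]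
    rw [← Finset.mul_sum, hA, mul_smul_comm, mul_one, smul_smul]
  simp_rw [this]
  rw [← Finset.smul_sum, hB, smul_smul, sq]

theorem aux_tuple {G : Type} [Group G] [Fintype G] (V : FDRep ℂ G) (hV : Simple V) (g : ℕ) :
    ∑ p : Fin g → G × G,
        V.ρ (List.ofFn fun i => (p i).1 * (p i).2 * (p i).1⁻¹ * (p i).2⁻¹).prod =
      (((Fintype.card G : ℂ) / V.character 1) ^ (2 * g)) • (1 : V →ₗ[ℂ] V) := by
  induction g with
  | zero => simp
  | succ g ih =>
    rw [← (Fin.consEquiv fun _ => G × G).sum_comp]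
    rw [Fintype.sum_prod_type]
    simp only [Fin.consEquiv_apply, List.ofFn_succ, Fin.cons_zero, Fin.cons_succ, List.prod_cons,
      map_mul V.ρ (_ * _ * _ * _) (List.prod _)]
    simp_rw [← Finset.mul_sum]
    rw [ih, ← Finset.sum_mul, Fintype.sum_prod_type, aux_comm V hV, smul_mul_smul_comm, one_mul]
    congr 1
    ring

theorem statement2 (G : Type) [Group G] [Fintype G] (g : ℕ) (z : G)
    (ι : Type) [Fintype ι] (V : ι → FDRep ℂ G)
    (hsimple : ∀ i, Simple (V i))
    (hdistinct : ∀ i j, i ≠ j → ¬ Nonempty (V i ≅ V j))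
    (hcomplete : ∀ W : FDRep ℂ G, Simple W → ∃ i, Nonempty (W ≅ V i)) :
    (Nat.card {p : (Fin g → G) × (Fin g → G) //
        (List.ofFn fun i => p.1 i * p.2 i * (p.1 i)⁻¹ * (p.2 i)⁻¹).prod * z = 1} : ℂ)
      = ∑ i, ((Fintype.card G : ℂ) / (V i).character 1) ^ (2 * (g : ℤ) - 1)
          * (V i).character z := by
  classical
  have hG : (Fintype.card G : ℂ) ≠ 0 := by simp
  let P : (Fin g → G × G) → G := fun p =>
    (List.ofFn fun i => (p i).1 * (p i).2 * (p i).1⁻¹ * (p i).2⁻¹).prod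
  have e : Nat.card {p : (Fin g → G) × (Fin g → G) //
        (List.ofFn fun i => p.1 i * p.2 i * (p.1 i)⁻¹ * (p.2 i)⁻¹).prod * z = 1}
      = Nat.card {p : Fin g → G × G // P p * z = 1} :=
    Nat.card_congr
      ((Equiv.arrowProdEquivProdArrow (Fin g) (fun _ => G) (fun _ => G)).symm.subtypeEquiv
        fun p => Iff.rfl)
  rw [e, Nat.card_eq_fintype_card, Fintype.card_subtype, Finset.card_filter]
  push_cast
  have h1 : ∀ p : Fin g → G × G, (if P p * z = 1 then (1 : ℂ) else 0) =
      (Fintype.card G : ℂ)⁻¹ * ∑ i, (V i).character 1 * (V i).character (P p * z) := by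
    intro p
    rw [aux_reg_sum ι V hsimple hdistinct hcomplete]
    split_ifs <;> simp
  simp_rw [h1]
  rw [← Finset.mul_sum, Finset.sum_comm, Finset.mul_sum]
  refine Finset.sum_congr rfl fun i _ => ?_
  rw [← Finset.mul_sum]
  have h2 : ∑ p : Fin g → G × G, (V i).character (P p * z) =
      ((Fintype.card G : ℂ) / (V i).character 1) ^ (2 * g) * (V i).character z := by
    have := congrArg (fun f => LinearMap.trace ℂ (V i) (f * (V i).ρ z)) (aux_tuple (V i) (hsimple i) g)
    simp only [Finset.sum_mul, map_sum, smul_mul_assoc, one_mul, map_smul, smul_eq_mul,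
      ← map_mul (V i).ρ] at this
    exact this
  have hd := aux_dim_ne (V i) (hsimple i)
  have hq : (Fintype.card G : ℂ) / (V i).character 1 ≠ 0 := div_ne_zero hG hd
  rw [h2, zpow_sub_one₀ hq, inv_div]
  have : ((Fintype.card G : ℂ) / (V i).character 1) ^ (2 * (g : ℤ)) =
      ((Fintype.card G : ℂ) / (V i).character 1) ^ (2 * g) := by
    rw [← zpow_natCast]; push_cast; rfl
  rw [this]
  ring
end

section
/- Let K be a field, n ≥ 1 an integer, ζ ∈ K a primitive n-th root of unity, and A, B ∈ GL(n,K) matrices satisfying A B A⁻¹ B⁻¹ = ζ·I_n. Then every K-linear subspace W ⊆ K^n with A·W ⊆ W and B·W ⊆ W is either the zero subspace or all of K^n; i.e., the action on K^n of the subgroup generated by A and B is irreducible. -/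
open scoped MatrixGroups

/-- Let `K` be a field, `n ≥ 1`, `ζ ∈ K` a primitive `n`-th root of unity
and `A, B ∈ GL(n,K)` with `A B A⁻¹ B⁻¹ = ζ·Iₙ`.  Then every linear subspace `W ⊆ Kⁿ`
invariant under `A` and `B` is `0` or all of `Kⁿ`: the subgroup generated by `A` and `B`
acts irreducibly on `Kⁿ`. -/
theorem statement5 (K : Type*) [Field K] (n : ℕ) (hn : 1 ≤ n)
    (ζ : K) (hζ : IsPrimitiveRoot ζ n) (A B : GL (Fin n) K)
    (hcomm : (↑(A * B * A⁻¹ * B⁻¹) : Matrix (Fin n) (Fin n) K)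
      = ζ • (1 : Matrix (Fin n) (Fin n) K))
    (W : Submodule K (Fin n → K))
    (hA : ∀ v ∈ W, Matrix.mulVec (A : Matrix (Fin n) (Fin n) K) v ∈ W)
    (hB : ∀ v ∈ W, Matrix.mulVec (B : Matrix (Fin n) (Fin n) K) v ∈ W) :
    W = ⊥ ∨ W = ⊤ := by
  have hAB : (A : Matrix (Fin n) (Fin n) K) * (B : Matrix (Fin n) (Fin n) K)
      = ζ • ((B : Matrix (Fin n) (Fin n) K) * (A : Matrix (Fin n) (Fin n) K)) := by
    have h1 : A * B = (A * B * A⁻¹ * B⁻¹) * (B * A) := by group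
    have h2 := congrArg (fun g : GL (Fin n) K => (g : Matrix (Fin n) (Fin n) K)) h1
    simp only [Units.val_mul] at h2
    rw [h2]
    simp only [Units.val_mul] at hcomm
    rw [hcomm, smul_mul_assoc, one_mul]
  let a : W →ₗ[K] W := (Matrix.mulVecLin (A : Matrix (Fin n) (Fin n) K)).restrict hA
  let b : W →ₗ[K] W := (Matrix.mulVecLin (B : Matrix (Fin n) (Fin n) K)).restrict hB
  have hab : a * b = ζ • (b * a) := by
    ext1 w
    apply Subtype.ext
    change Matrix.mulVec (A : Matrix (Fin n) (Fin n) K)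
        (Matrix.mulVec (B : Matrix (Fin n) (Fin n) K) w.1)
      = ζ • Matrix.mulVec (B : Matrix (Fin n) (Fin n) K)
        (Matrix.mulVec (A : Matrix (Fin n) (Fin n) K) w.1)
    rw [Matrix.mulVec_mulVec, Matrix.mulVec_mulVec, hAB, Matrix.smul_mulVec]
  have hdet : ∀ (M : GL (Fin n) K)
      (hM : ∀ v ∈ W, Matrix.mulVecLin (M : Matrix (Fin n) (Fin n) K) v ∈ W),
      LinearMap.det ((Matrix.mulVecLin (M : Matrix (Fin n) (Fin n) K)).restrict hM) ≠ 0 := by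
    intro M hM h0
    have hlt := LinearMap.bot_lt_ker_of_det_eq_zero h0
    apply hlt.ne'
    rw [LinearMap.ker_eq_bot]
    intro x y hxy
    apply Subtype.ext
    apply Matrix.mulVec_injective_of_isUnit M.isUnit
    exact congrArg Subtype.val hxy
  have hd := congrArg LinearMap.det hab
  rw [LinearMap.det_smul, map_mul, map_mul, mul_comm (LinearMap.det b)] at hd
  have hne : LinearMap.det a * LinearMap.det b ≠ 0 := mul_ne_zero (hdet A hA) (hdet B hB)
  have hpow : ζ ^ Module.finrank K W = 1 := (mul_eq_right₀ hne).mp hd.symm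
  have hdvd := hζ.dvd_of_pow_eq_one _ hpow
  rcases Nat.eq_zero_or_pos (Module.finrank K W) with h | h
  · left
    exact Submodule.finrank_eq_zero.mp h
  · right
    apply Submodule.eq_top_of_finrank_eq
    have h1 := Submodule.finrank_le W
    have h2 := Nat.le_of_dvd h hdvd
    rw [Module.finrank_fin_fun] at *
    omega
end

section
/- Let K be an algebraically closed field, n ≥ 1 an integer, and ζ ∈ K a primitive n-th root of unity. Consider pairs (A,B) ∈ GL(n,K)² with A B A⁻¹ B⁻¹ = ζ·I_n. Then: (i) every such pair satisfies A^n = α·I_n and B^n = β·I_n for unique α, β ∈ K^×; (ii) two such pairs (A,B) and (A′,B′) are simultaneously conjugate by an element of GL(n,K) if and only if A^n = A′^n and B^n = B′^n; and (iii) for every (α,β) ∈ K^× × K^× there exists such a pair with A^n = α·I_n and B^n = β·I_n. In other words, (A,B) ↦ (α,β) induces a bijection between GL(n,K)-conjugation orbits of solutions and K^× × K^×. -/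
open scoped MatrixGroups

section Helpers
variable {K : Type*} [Field K] {n : ℕ}

/-- The shifted eigenvector relation. -/
lemma aux_shift {ζ : K} {A B : Matrix (Fin n) (Fin n) K} (h : A * B = ζ • (B * A))
    {v : Fin n → K} {l : K} (hv : A.mulVec v = l • v) (k : ℕ) :
    A.mulVec ((B ^ k).mulVec v) = (l * ζ ^ k) • (B ^ k).mulVec v := by
  induction k with
  | zero => simpa using hv
  | succ k ih =>
    rw [pow_succ', ← Matrix.mulVec_mulVec, Matrix.mulVec_mulVec, h, Matrix.smul_mulVec,
      ← Matrix.mulVec_mulVec, ih, Matrix.mulVec_smul, smul_smul]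
    congr 1
    ring

/-- The matrix whose columns are `B ^ k v`. -/
def auxP (B : Matrix (Fin n) (Fin n) K) (v : Fin n → K) : Matrix (Fin n) (Fin n) K :=
  Matrix.of fun i k => (B ^ (k : ℕ)).mulVec v i

lemma auxP_col (B : Matrix (Fin n) (Fin n) K) (v : Fin n → K) (k : Fin n) :
    (auxP B v).col k = (B ^ (k : ℕ)).mulVec v := rfl

lemma aux_pow_ne {B : Matrix (Fin n) (Fin n) K} (hB : IsUnit B) {v : Fin n → K} (hv : v ≠ 0)
    (k : ℕ) : (B ^ k).mulVec v ≠ 0 := by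
  intro h0
  apply hv
  exact Matrix.mulVec_injective_of_isUnit (hB.pow k) (by simpa using h0)

lemma auxP_unit {ζ : K} (hζ : IsPrimitiveRoot ζ n) {A B : Matrix (Fin n) (Fin n) K}
    (h : A * B = ζ • (B * A)) (hB : IsUnit B)
    {v : Fin n → K} (hv0 : v ≠ 0) {l : K} (hl : l ≠ 0) (hv : A.mulVec v = l • v) :
    IsUnit (auxP B v) := by
  rw [← Matrix.linearIndependent_cols_iff_isUnit]
  apply Module.End.eigenvectors_linearIndependent' A.mulVecLin
    (fun k : Fin n => l * ζ ^ (k : ℕ))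
  · intro i j hij
    have := mul_left_cancel₀ hl hij
    exact Fin.ext (hζ.pow_inj i.2 j.2 this)
  · intro k
    rw [Module.End.hasEigenvector_iff, Module.End.mem_eigenspace_iff]
    exact ⟨aux_shift h hv k, aux_pow_ne hB hv0 k⟩

lemma aux_ext {P X Y : Matrix (Fin n) (Fin n) K} (hP : IsUnit P)
    (h : ∀ k, X.mulVec (P.col k) = Y.mulVec (P.col k)) : X = Y := by
  apply hP.mul_right_cancel
  ext i k
  exact congrFun (h k) i

lemma aux_eig_pow {A : Matrix (Fin n) (Fin n) K} {w : Fin n → K} {l : K}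
    (hw : A.mulVec w = l • w) (k : ℕ) : (A ^ k).mulVec w = l ^ k • w := by
  induction k with
  | zero => simp
  | succ k ih =>
    rw [pow_succ, ← Matrix.mulVec_mulVec, hw, Matrix.mulVec_smul, ih, smul_smul, pow_succ']

lemma aux_eig_ne {A : Matrix (Fin n) (Fin n) K} (hA : IsUnit A) {v : Fin n → K} (hv0 : v ≠ 0)
    {l : K} (hv : A.mulVec v = l • v) : l ≠ 0 := by
  rintro rfl
  apply hv0
  exact Matrix.mulVec_injective_of_isUnit hA (by simpa using hv)

lemma aux_pow {ζ : K} (hζ : IsPrimitiveRoot ζ n) {A B : Matrix (Fin n) (Fin n) K}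
    (h : A * B = ζ • (B * A)) (hA : IsUnit A) (hB : IsUnit B)
    {v : Fin n → K} (hv0 : v ≠ 0) {l : K} (hv : A.mulVec v = l • v) :
    A ^ n = l ^ n • (1 : Matrix (Fin n) (Fin n) K) := by
  apply aux_ext (auxP_unit hζ h hB hv0 (aux_eig_ne hA hv0 hv) hv)
  intro k
  rw [auxP_col, aux_eig_pow (aux_shift h hv k), Matrix.smul_mulVec, Matrix.one_mulVec, mul_pow,
    ← pow_mul, mul_comm (k : ℕ), pow_mul, hζ.pow_eq_one, one_pow, mul_one]

lemma aux_exists [IsAlgClosed K] (hn : 1 ≤ n) (A : Matrix (Fin n) (Fin n) K) :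
    ∃ (l : K) (v : Fin n → K), v ≠ 0 ∧ A.mulVec v = l • v := by
  have : NeZero n := ⟨by omega⟩
  obtain ⟨l, hl⟩ := Module.End.exists_eigenvalue A.mulVecLin
  obtain ⟨v, hv⟩ := hl.exists_hasEigenvector
  exact ⟨l, v, hv.2, by simpa using hv.apply_eq_smul⟩

lemma aux_swap {ζ : K} (hζ : ζ ≠ 0) {A B : Matrix (Fin n) (Fin n) K}
    (h : A * B = ζ • (B * A)) : B * A = ζ⁻¹ • (A * B) := by
  rw [h, smul_smul, inv_mul_cancel₀ hζ, one_smul]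

lemma aux_comm_s8 {ζ : K} {A B : GL (Fin n) K} :
    (↑(A * B * A⁻¹ * B⁻¹) : Matrix (Fin n) (Fin n) K) = ζ • (1 : Matrix (Fin n) (Fin n) K) ↔
    (A : Matrix (Fin n) (Fin n) K) * B = ζ • ((B : Matrix (Fin n) (Fin n) K) * A) := by
  have e : A * B = (A * B * A⁻¹ * B⁻¹) * (B * A) := by group
  constructor
  · intro h
    rw [← Units.val_mul, e, Units.val_mul, h, Matrix.smul_mul, one_mul, Units.val_mul]
  · intro h
    have e2 : A * B * A⁻¹ * B⁻¹ = (A * B) * (B * A)⁻¹ := by group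
    rw [e2, Units.val_mul, Units.val_mul A B, h, Matrix.smul_mul, ← Units.val_mul,
      ← Units.val_mul, mul_inv_cancel, Units.val_one]

lemma aux_part1 [IsAlgClosed K] (hn : 1 ≤ n) {ζ : K} (hζ : IsPrimitiveRoot ζ n)
    {A B : Matrix (Fin n) (Fin n) K}
    (h : A * B = ζ • (B * A)) (hA : IsUnit A) (hB : IsUnit B) :
    ∃ α : K, α ≠ 0 ∧ A ^ n = α • (1 : Matrix (Fin n) (Fin n) K) := by
  obtain ⟨l, v, hv0, hv⟩ := aux_exists hn A
  exact ⟨l ^ n, pow_ne_zero _ (aux_eig_ne hA hv0 hv), aux_pow hζ h hA hB hv0 hv⟩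

lemma aux_smul_inj (hn : 1 ≤ n) {a b : K}
    (h : a • (1 : Matrix (Fin n) (Fin n) K) = b • (1 : Matrix (Fin n) (Fin n) K)) : a = b := by
  have := congrFun (congrFun h ⟨0, hn⟩) ⟨0, hn⟩
  simpa using this

/-- conjugating matrix -/
lemma aux_conj [IsAlgClosed K] (hn : 1 ≤ n) {ζ : K} (hζ : IsPrimitiveRoot ζ n)
    {A B A' B' : Matrix (Fin n) (Fin n) K}
    (h : A * B = ζ • (B * A)) (hA : IsUnit A) (hB : IsUnit B)
    (h' : A' * B' = ζ • (B' * A')) (hA' : IsUnit A') (hB' : IsUnit B')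
    (hAA : A ^ n = A' ^ n) (hBB : B ^ n = B' ^ n) :
    ∃ g : GL (Fin n) K, (g : Matrix (Fin n) (Fin n) K) * A = A' * g ∧
      (g : Matrix (Fin n) (Fin n) K) * B = B' * g := by
  have : NeZero n := ⟨by omega⟩
  obtain ⟨l, v, hv0, hv⟩ := aux_exists hn A
  obtain ⟨l', w, hw0, hw⟩ := aux_exists hn A'
  have hl := aux_eig_ne hA hv0 hv
  have hl' := aux_eig_ne hA' hw0 hw
  have hll : l ^ n = l' ^ n := by
    apply aux_smul_inj hn
    rw [← aux_pow hζ h hA hB hv0 hv, ← aux_pow hζ h' hA' hB' hw0 hw, hAA]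
  obtain ⟨j, -, hj⟩ := hζ.eq_pow_of_pow_eq_one (ξ := l / l')
    (by rw [div_pow, hll, div_self (pow_ne_zero _ hl')])
  obtain ⟨v', hv0', hv'⟩ : ∃ v' : Fin n → K, v' ≠ 0 ∧ A'.mulVec v' = l • v' := by
    refine ⟨_, aux_pow_ne hB' hw0 j, ?_⟩
    rw [aux_shift h' hw, hj, mul_div_cancel₀ _ hl']
  obtain ⟨β, -, hβ⟩ := aux_part1 hn (hζ.inv) (aux_swap (hζ.ne_zero (NeZero.ne n)) h) hB hA
  have hβ' := hBB ▸ hβ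
  obtain ⟨P, hP⟩ := auxP_unit hζ h hB hv0 hl hv
  obtain ⟨P', hP'⟩ := auxP_unit hζ h' hB' hv0' hl hv'
  have key : ∀ k : ℕ, k < n →
      ((P' * P⁻¹ : GL (Fin n) K) : Matrix (Fin n) (Fin n) K).mulVec ((B ^ k).mulVec v)
        = (B' ^ k).mulVec v' := by
    intro k hk
    have e : ((P' * P⁻¹ : GL (Fin n) K) : Matrix (Fin n) (Fin n) K) * auxP B v = auxP B' v' := by
      rw [← hP, ← hP', ← Units.val_mul]
      simp
    ext i
    exact congrFun (congrFun e i) ⟨k, hk⟩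
  have key' : ∀ k : ℕ, k ≤ n →
      ((P' * P⁻¹ : GL (Fin n) K) : Matrix (Fin n) (Fin n) K).mulVec ((B ^ k).mulVec v)
        = (B' ^ k).mulVec v' := by
    intro k hk
    rcases hk.lt_or_eq with hk | rfl
    · exact key k hk
    · have := key 0 (by omega)
      simp only [pow_zero, Matrix.one_mulVec] at this
      rw [hβ, hβ', Matrix.smul_mulVec, Matrix.smul_mulVec, Matrix.mulVec_smul,
        Matrix.one_mulVec, Matrix.one_mulVec, this]
  have hPu : IsUnit (auxP B v) := ⟨P, hP⟩
  refine ⟨P' * P⁻¹, aux_ext hPu fun k => ?_, aux_ext hPu fun k => ?_⟩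
  · rw [auxP_col, ← Matrix.mulVec_mulVec, ← Matrix.mulVec_mulVec, aux_shift h hv,
      Matrix.mulVec_smul, key k k.2, aux_shift h' hv']
  · rw [auxP_col, ← Matrix.mulVec_mulVec, ← Matrix.mulVec_mulVec, key k k.2,
      Matrix.mulVec_mulVec v B, Matrix.mulVec_mulVec v' B', ← pow_succ', ← pow_succ', key' _ k.2]

lemma aux_part3 [IsAlgClosed K] (hn : 1 ≤ n) {ζ : K} (hζ : IsPrimitiveRoot ζ n)
    {α β : K} (hα : α ≠ 0) (hβ : β ≠ 0) :
    ∃ A B : Matrix (Fin n) (Fin n) K, IsUnit A ∧ IsUnit B ∧ A * B = ζ • (B * A) ∧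
      A ^ n = α • (1 : Matrix (Fin n) (Fin n) K) ∧
      B ^ n = β • (1 : Matrix (Fin n) (Fin n) K) := by
  have : NeZero n := ⟨by omega⟩
  have hζ0 := hζ.ne_zero (NeZero.ne n)
  obtain ⟨a, ha⟩ := IsAlgClosed.exists_pow_nat_eq α (n := n) (by omega)
  obtain ⟨b, hb⟩ := IsAlgClosed.exists_pow_nat_eq β (n := n) (by omega)
  have ha0 : a ≠ 0 := by rintro rfl; rw [zero_pow (by omega)] at ha; exact hα ha.symm
  have hb0 : b ≠ 0 := by rintro rfl; rw [zero_pow (by omega)] at hb; exact hβ hb.symm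
  let A : Matrix (Fin n) (Fin n) K := Matrix.diagonal fun i => a * ζ ^ (i : ℕ)
  let B : Matrix (Fin n) (Fin n) K := b • Equiv.Perm.permMatrix K (Equiv.subRight (1 : Fin n))
  have hA : IsUnit A := by
    rw [Matrix.isUnit_iff_isUnit_det, Matrix.det_diagonal, isUnit_iff_ne_zero]
    exact Finset.prod_ne_zero_iff.2 fun i _ => mul_ne_zero ha0 (pow_ne_zero _ hζ0)
  have hB : IsUnit B := by
    rw [Matrix.isUnit_iff_isUnit_det, Matrix.det_smul, Matrix.det_permutation,
      isUnit_iff_ne_zero]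
    refine mul_ne_zero (pow_ne_zero _ hb0) ?_
    rcases Int.units_eq_one_or (Equiv.Perm.sign (Equiv.subRight (1 : Fin n))) with h | h <;>
      simp [h]
  have hpow : ∀ i : Fin n, ζ ^ (i : ℕ) = ζ * ζ ^ ((i - 1 : Fin n) : ℕ) := by
    intro i
    obtain ⟨j, rfl⟩ : ∃ j, i = j + 1 := ⟨i - 1, by simp⟩
    rw [add_sub_cancel_right, ← pow_succ', ← pow_mod_orderOf ζ ((j : ℕ) + 1),
      ← hζ.eq_orderOf, Fin.val_add, Fin.val_one', Nat.add_mod_mod]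
  have hAB : A * B = ζ • (B * A) := by
    ext i j
    simp only [A, B, Matrix.diagonal_mul, Matrix.smul_apply, Matrix.mul_diagonal, smul_eq_mul,
      Equiv.Perm.permMatrix, PEquiv.toMatrix_apply, Equiv.toPEquiv_apply, Option.mem_def,
      Option.some.injEq, Equiv.subRight_apply]
    split_ifs with hij
    · rw [← hij, hpow i]; ring
    · ring
  refine ⟨A, B, hA, hB, hAB, ?_, ?_⟩
  · rw [← ha]
    apply aux_pow hζ hAB hA hB (v := Pi.single 0 1) (by simp)
    ext i
    simp only [A, Matrix.mulVec_diagonal, Pi.smul_apply, smul_eq_mul]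
    by_cases hi : i = 0
    · subst hi; simp
    · simp [hi]
  · rw [← hb]
    apply aux_pow hζ.inv (aux_swap hζ0 hAB) hB hA (v := fun _ => 1)
    · intro h; simpa using congrFun h 0
    · ext i
      simp [B, Matrix.smul_mulVec, Matrix.permMatrix_mulVec]

end Helpers

/-- Let `K` be an algebraically closed field, `n ≥ 1` and `ζ ∈ K` a
primitive `n`-th root of unity.  For pairs `(A,B) ∈ GL(n,K)²` with `A B A⁻¹ B⁻¹ = ζ·Iₙ`:
(i) each such pair satisfies `Aⁿ = α·Iₙ`, `Bⁿ = β·Iₙ` for unique `α, β ∈ K^×`;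
(ii) two such pairs are simultaneously conjugate iff `Aⁿ = A'ⁿ` and `Bⁿ = B'ⁿ`;
(iii) every `(α,β) ∈ K^× × K^×` arises this way.  Hence `(A,B) ↦ (α,β)` induces a
bijection between conjugation orbits of solutions and `K^× × K^×`. -/
theorem statement8 (K : Type*) [Field K] [IsAlgClosed K] (n : ℕ) (hn : 1 ≤ n)
    (ζ : K) (hζ : IsPrimitiveRoot ζ n) :
    (∀ A B : GL (Fin n) K,
        (↑(A * B * A⁻¹ * B⁻¹) : Matrix (Fin n) (Fin n) K)
          = ζ • (1 : Matrix (Fin n) (Fin n) K) →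
        ∃! αβ : K × K, αβ.1 ≠ 0 ∧ αβ.2 ≠ 0 ∧
          (A : Matrix (Fin n) (Fin n) K) ^ n = αβ.1 • (1 : Matrix (Fin n) (Fin n) K) ∧
          (B : Matrix (Fin n) (Fin n) K) ^ n = αβ.2 • (1 : Matrix (Fin n) (Fin n) K)) ∧
    (∀ A B A' B' : GL (Fin n) K,
        (↑(A * B * A⁻¹ * B⁻¹) : Matrix (Fin n) (Fin n) K)
          = ζ • (1 : Matrix (Fin n) (Fin n) K) →
        (↑(A' * B' * A'⁻¹ * B'⁻¹) : Matrix (Fin n) (Fin n) K)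
          = ζ • (1 : Matrix (Fin n) (Fin n) K) →
        ((∃ g : GL (Fin n) K, A' = g * A * g⁻¹ ∧ B' = g * B * g⁻¹) ↔
          ((A : Matrix (Fin n) (Fin n) K) ^ n = (A' : Matrix (Fin n) (Fin n) K) ^ n ∧
           (B : Matrix (Fin n) (Fin n) K) ^ n = (B' : Matrix (Fin n) (Fin n) K) ^ n))) ∧
    (∀ α β : K, α ≠ 0 → β ≠ 0 →
        ∃ A B : GL (Fin n) K,
          (↑(A * B * A⁻¹ * B⁻¹) : Matrix (Fin n) (Fin n) K)
            = ζ • (1 : Matrix (Fin n) (Fin n) K) ∧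
          (A : Matrix (Fin n) (Fin n) K) ^ n = α • (1 : Matrix (Fin n) (Fin n) K) ∧
          (B : Matrix (Fin n) (Fin n) K) ^ n = β • (1 : Matrix (Fin n) (Fin n) K)) := by
  have : NeZero n := ⟨by omega⟩
  have hζ0 := hζ.ne_zero (NeZero.ne n)
  refine ⟨?_, ?_, ?_⟩
  · intro A B h
    rw [aux_comm_s8] at h
    obtain ⟨α, hα, hA⟩ := aux_part1 hn hζ h A.isUnit B.isUnit
    obtain ⟨β, hβ, hB⟩ := aux_part1 hn hζ.inv (aux_swap hζ0 h) B.isUnit A.isUnit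
    refine ⟨(α, β), ⟨hα, hβ, hA, hB⟩, ?_⟩
    rintro ⟨α', β'⟩ ⟨-, -, hA', hB'⟩
    exact Prod.ext (aux_smul_inj hn (hA'.symm.trans hA)) (aux_smul_inj hn (hB'.symm.trans hB))
  · intro A B A' B' h h'
    rw [aux_comm_s8] at h h'
    constructor
    · obtain ⟨α, hα, hA⟩ := aux_part1 hn hζ h A.isUnit B.isUnit
      obtain ⟨β, hβ, hB⟩ := aux_part1 hn hζ.inv (aux_swap hζ0 h) B.isUnit A.isUnit
      rintro ⟨g, rfl, rfl⟩
      have conj : ∀ (X : GL (Fin n) K) (c : K),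
          (X : Matrix (Fin n) (Fin n) K) ^ n = c • (1 : Matrix (Fin n) (Fin n) K) →
          (X : Matrix (Fin n) (Fin n) K) ^ n
            = ((g * X * g⁻¹ : GL (Fin n) K) : Matrix (Fin n) (Fin n) K) ^ n := by
        intro X c hX
        rw [← Units.val_pow_eq_pow_val (g * X * g⁻¹), conj_pow, Units.val_mul, Units.val_mul,
          Units.val_pow_eq_pow_val, hX, Matrix.mul_smul, mul_one, Matrix.smul_mul,
          ← Units.val_mul, mul_inv_cancel, Units.val_one]
      exact ⟨conj A α hA, conj B β hB⟩
    · rintro ⟨hA, hB⟩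
      obtain ⟨g, h1, h2⟩ := aux_conj hn hζ h A.isUnit B.isUnit h' A'.isUnit B'.isUnit hA hB
      refine ⟨g, ?_, ?_⟩
      · rw [eq_mul_inv_iff_mul_eq]
        exact Units.ext h1.symm
      · rw [eq_mul_inv_iff_mul_eq]
        exact Units.ext h2.symm
  · intro α β hα hβ
    obtain ⟨A, B, ⟨A, rfl⟩, ⟨B, rfl⟩, h, hA, hB⟩ := aux_part3 hn hζ hα hβ
    exact ⟨A, B, aux_comm_s8.2 h, hA, hB⟩
end

section
/- Let n ≥ 1 and g ≥ 1 be integers and ζ ∈ ℂ a primitive n-th root of unity. Let U ⊆ (M_n(ℂ))^{2g} be the open set of 2g-tuples of invertible matrices and μ: U → M_n(ℂ) the map μ(A_1,B_1,…,A_g,B_g) = [A_1,B_1][A_2,B_2]⋯[A_g,B_g]. Let s ∈ U be a point with μ(s) = ζ·I_n. Then the (Fréchet) derivative of μ at s is a ℂ-linear map (M_n(ℂ))^{2g} → M_n(ℂ) whose range is exactly the subspace {M ∈ M_n(ℂ) : tr(ζ⁻¹M) = 0}; in particular it is surjective onto this tangent space of SL(n,ℂ) at ζ·I_n. -/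
attribute [local instance]
  Matrix.linftyOpNormedAddCommGroup Matrix.linftyOpNormedRing Matrix.linftyOpNormedAlgebra

/-- The map `μ(A₁,B₁,…,A_g,B_g) = [A₁,B₁]⋯[A_g,B_g]` on `2g`-tuples of `n×n` complex
matrices (inverses taken in the sense of `Matrix.inv`, which is the genuine inverse at
tuples of invertible matrices). -/
noncomputable def muMap (n g : ℕ) :
    ((Fin g → Matrix (Fin n) (Fin n) ℂ) × (Fin g → Matrix (Fin n) (Fin n) ℂ)) →
      Matrix (Fin n) (Fin n) ℂ :=
  fun p => (List.ofFn fun i => p.1 i * p.2 i * (p.1 i)⁻¹ * (p.2 i)⁻¹).prod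

/-- Every linear functional on matrices is a trace pairing. -/
lemma functional_eq_trace {n : ℕ} (φ : Matrix (Fin n) (Fin n) ℂ →ₗ[ℂ] ℂ) :
    ∃ X : Matrix (Fin n) (Fin n) ℂ, ∀ M, φ M = Matrix.trace (X * M) := by
  refine ⟨Matrix.of fun i j => φ (Matrix.single j i 1), fun M => ?_⟩
  conv_lhs => rw [Matrix.matrix_eq_sum_single M]
  simp only [map_sum, Matrix.trace, Matrix.diag, Matrix.mul_apply, Matrix.of_apply]
  rw [Finset.sum_comm]
  refine Finset.sum_congr rfl fun i _ => Finset.sum_congr rfl fun j _ => ?_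
  have : Matrix.single j i (M j i) = (M j i) • Matrix.single j i (1 : ℂ) := by
    simp [Matrix.smul_single]
  rw [this, map_smul, smul_eq_mul, mul_comm]

lemma eq_zero_of_trace {n : ℕ} (X : Matrix (Fin n) (Fin n) ℂ)
    (h : ∀ M, Matrix.trace (X * M) = 0) : X = 0 := by
  ext i j
  have := h (Matrix.single j i 1)
  simpa [Matrix.trace_mul_single] using this

/-- The derivative of the commutator map. -/
lemma comm_hasFDerivAt {n : ℕ} (a b : Matrix (Fin n) (Fin n) ℂ) (ha : IsUnit a) (hb : IsUnit b) :
    ∃ D : (Matrix (Fin n) (Fin n) ℂ × Matrix (Fin n) (Fin n) ℂ) →L[ℂ] Matrix (Fin n) (Fin n) ℂ,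
      HasFDerivAt (fun p : Matrix (Fin n) (Fin n) ℂ × Matrix (Fin n) (Fin n) ℂ =>
        p.1 * p.2 * p.1⁻¹ * p.2⁻¹) D (a, b) ∧
      ∀ h k, D (h, k) = h * b * a⁻¹ * b⁻¹ + a * k * a⁻¹ * b⁻¹ - a * b * a⁻¹ * h * a⁻¹ * b⁻¹
        - a * b * a⁻¹ * b⁻¹ * k * b⁻¹ := by
  have : CompleteSpace (Matrix (Fin n) (Fin n) ℂ) := FiniteDimensional.complete ℂ _
  have inv : ∀ x : Matrix (Fin n) (Fin n) ℂ, IsUnit x →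
      HasFDerivAt (fun y : Matrix (Fin n) (Fin n) ℂ => y⁻¹)
        (-ContinuousLinearMap.mulLeftRight ℂ (Matrix (Fin n) (Fin n) ℂ) x⁻¹ x⁻¹) x := by
    rintro _ ⟨u, rfl⟩
    have := hasFDerivAt_ringInverse (𝕜 := ℂ) u
    rw [← Matrix.coe_units_inv]
    have e : (fun y : Matrix (Fin n) (Fin n) ℂ => y⁻¹) = Ring.inverse :=
      funext Matrix.nonsing_inv_eq_ringInverse
    rw [e]
    exact this
  have h1 : HasFDerivAt (fun p : Matrix (Fin n) (Fin n) ℂ × Matrix (Fin n) (Fin n) ℂ => p.1)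
    (ContinuousLinearMap.fst ℂ _ _) (a, b) := hasFDerivAt_fst
  have h2 : HasFDerivAt (fun p : Matrix (Fin n) (Fin n) ℂ × Matrix (Fin n) (Fin n) ℂ => p.2)
    (ContinuousLinearMap.snd ℂ _ _) (a, b) := hasFDerivAt_snd
  have h3 := (inv a ha).comp (a, b) h1
  have h4 := (inv b hb).comp (a, b) h2
  have := ((h1.mul' h2).mul' h3).mul' h4
  refine ⟨_, this, fun h k => ?_⟩
  change a * b * a⁻¹ * -(b⁻¹ * k * b⁻¹) +
    (a * b * -(a⁻¹ * h * a⁻¹) + (a * k + h * b) * a⁻¹) * b⁻¹ = _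
  noncomm_ring

lemma comm_trace {n : ℕ} (a b : Matrix (Fin n) (Fin n) ℂ) (ha : IsUnit a) (hb : IsUnit b) :
    ∃ D : (Matrix (Fin n) (Fin n) ℂ × Matrix (Fin n) (Fin n) ℂ) →L[ℂ] Matrix (Fin n) (Fin n) ℂ,
      HasFDerivAt (fun p : Matrix (Fin n) (Fin n) ℂ × Matrix (Fin n) (Fin n) ℂ =>
        p.1 * p.2 * p.1⁻¹ * p.2⁻¹) D (a, b) ∧
      (∀ v, Matrix.trace (D v * (a * b * a⁻¹ * b⁻¹)⁻¹) = 0) ∧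
      ∀ X, (∀ v, Matrix.trace (X * (D v * (a * b * a⁻¹ * b⁻¹)⁻¹)) = 0) →
        Commute X a ∧ Commute X b := by
  obtain ⟨D, hD, hf⟩ := comm_hasFDerivAt a b ha hb
  refine ⟨D, hD, ?_⟩
  have ha' := (Matrix.isUnit_iff_isUnit_det a).1 ha
  have hb' := (Matrix.isUnit_iff_isUnit_det b).1 hb
  have hc : (a * b * a⁻¹ * b⁻¹)⁻¹ = b * a * b⁻¹ * a⁻¹ := by
    simp only [Matrix.mul_inv_rev, Matrix.nonsing_inv_nonsing_inv _ ha',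
      Matrix.nonsing_inv_nonsing_inv _ hb', mul_assoc]
  rw [hc]
  have h1 := Matrix.mul_nonsing_inv _ ha'
  have h2 := Matrix.nonsing_inv_mul _ ha'
  have h3 := Matrix.mul_nonsing_inv _ hb'
  have h4 := Matrix.nonsing_inv_mul _ hb'
  clear hD hc
  generalize a⁻¹ = u' at *
  generalize b⁻¹ = w' at *
  rename' a => u, b => w
  have g1 : ∀ z, u * (u' * z) = z := fun z => by rw [← mul_assoc, h1, one_mul]
  have g2 : ∀ z, u' * (u * z) = z := fun z => by rw [← mul_assoc, h2, one_mul]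
  have g3 : ∀ z, w * (w' * z) = z := fun z => by rw [← mul_assoc, h3, one_mul]
  have g4 : ∀ z, w' * (w * z) = z := fun z => by rw [← mul_assoc, h4, one_mul]
  -- the two families of directions
  have key : ∀ p q : Matrix (Fin n) (Fin n) ℂ, D (p * u, q * w) * (w * u * w' * u') =
      p - u * w * u' * p * (u * w' * u') + u * q * u'
        - u * w * u' * w' * q * (w * u * w' * u') := by
    intro p q
    rw [hf]
    simp only [add_mul, sub_mul, mul_assoc, g1, g2, g3, g4, h1, h2, h3, h4, mul_one]
    abel
  have key2 : ∀ X p q : Matrix (Fin n) (Fin n) ℂ,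
      Matrix.trace (X * (D (p * u, q * w) * (w * u * w' * u'))) =
      Matrix.trace ((X - (u * w' * u') * X * (u * w * u')) * p) +
      Matrix.trace ((u' * X * u - (w * u * w' * u') * X * (u * w * u' * w')) * q) := by
    intro X p q
    rw [key]
    have e1 : Matrix.trace ((u * w' * u') * X * (u * w * u') * p) =
        Matrix.trace (X * (u * w * u' * p * (u * w' * u'))) := by
      rw [show (u * w' * u') * X * (u * w * u') * p =
        (u * w' * u') * (X * (u * w * u') * p) by noncomm_ring, Matrix.trace_mul_comm]
      congr 1; noncomm_ring
    have e2 : Matrix.trace (u' * X * u * q) = Matrix.trace (X * (u * q * u')) := by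
      rw [show u' * X * u * q = u' * (X * u * q) by noncomm_ring, Matrix.trace_mul_comm]
      congr 1; noncomm_ring
    have e3 : Matrix.trace ((w * u * w' * u') * X * (u * w * u' * w') * q) =
        Matrix.trace (X * (u * w * u' * w' * q * (w * u * w' * u'))) := by
      rw [show (w * u * w' * u') * X * (u * w * u' * w') * q =
        (w * u * w' * u') * (X * (u * w * u' * w') * q) by noncomm_ring,
        Matrix.trace_mul_comm]
      congr 1; noncomm_ring
    simp only [sub_mul, mul_sub, mul_add, Matrix.trace_sub, Matrix.trace_add, e1, e2, e3]
    ring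
  have surj : ∀ v : Matrix (Fin n) (Fin n) ℂ × Matrix (Fin n) (Fin n) ℂ,
      v = ((v.1 * u') * u, (v.2 * w') * w) := by
    intro v; simp [mul_assoc, h1, h2, h3, h4, g1, g2, g3, g4]
  constructor
  · intro v
    rw [surj v]
    have := key2 1 (v.1 * u') (v.2 * w')
    rw [one_mul] at this
    rw [this]
    simp [mul_assoc, h1, h2, h3, h4, g1, g2, g3, g4]
  · intro X hX
    have c1 : X - (u * w' * u') * X * (u * w * u') = 0 := by
      refine eq_zero_of_trace _ fun M => ?_
      have := key2 X M 0
      rw [hX] at this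
      simpa using this.symm
    have c2 : u' * X * u - (w * u * w' * u') * X * (u * w * u' * w') = 0 := by
      refine eq_zero_of_trace _ fun M => ?_
      have := key2 X 0 M
      rw [hX] at this
      simpa using this.symm
    have c1' := sub_eq_zero.1 c1
    have c2' := sub_eq_zero.1 c2
    have c3 : u' * X * u = w * X * w' := by
      rw [c2']
      conv_rhs => rw [c1']
      noncomm_ring
    -- X commutes with u w
    have c4 : X * (u * w) = u * w * X := by
      have := congrArg (fun z => (u : Matrix (Fin n) (Fin n) ℂ) * z * w) c3
      simpa [mul_assoc, h1, h2, h3, h4, g1, g2, g3, g4] using this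
    have c5 : u * w * u' * X = X * (u * w * u') := by
      have := congrArg (fun z => (u * w * u' : Matrix (Fin n) (Fin n) ℂ) * z) c1'
      simpa [mul_assoc, h1, h2, h3, h4, g1, g2, g3, g4] using this
    have c6 : u' * X = X * u' := by
      have h : (u * w : Matrix (Fin n) (Fin n) ℂ) * (u' * X) = (u * w) * (X * u') := by
        rw [← mul_assoc, c5, ← mul_assoc, c4, mul_assoc]
      have := congrArg (fun z => w' * (u' * z)) h
      simpa [mul_assoc, g2, g4] using this
    have hu : X * u = u * X := by
      have := congrArg (fun z => u * z * u) c6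
      simpa [mul_assoc, g1, h2] using this
    refine ⟨hu, ?_⟩
    have h : u * (X * w) = u * (w * X) := by
      rw [← mul_assoc, ← hu, mul_assoc, c4, mul_assoc]
    have := congrArg (fun z => u' * z) h
    have h' : X * w = w * X := by simpa [g2] using this
    exact h'

lemma muMap_succ (n g : ℕ)
    (p : (Fin (g+1) → Matrix (Fin n) (Fin n) ℂ) × (Fin (g+1) → Matrix (Fin n) (Fin n) ℂ)) :
    muMap n (g+1) p = (p.1 0 * p.2 0 * (p.1 0)⁻¹ * (p.2 0)⁻¹) *
      muMap n g (fun i => p.1 i.succ, fun i => p.2 i.succ) := by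
  simp [muMap, List.ofFn_succ]

lemma mu_main (n : ℕ) : ∀ (g : ℕ) (A B : Fin g → Matrix (Fin n) (Fin n) ℂ)
    (_ : ∀ i, IsUnit (A i)) (_ : ∀ i, IsUnit (B i)),
    IsUnit (muMap n g (A, B)) ∧
    ∃ D : ((Fin g → Matrix (Fin n) (Fin n) ℂ) × (Fin g → Matrix (Fin n) (Fin n) ℂ)) →L[ℂ]
      Matrix (Fin n) (Fin n) ℂ, HasFDerivAt (muMap n g) D (A, B) ∧
      (∀ v, Matrix.trace (D v * (muMap n g (A, B))⁻¹) = 0) ∧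
      ∀ X, (∀ v, Matrix.trace (X * (D v * (muMap n g (A, B))⁻¹)) = 0) →
        ∀ i, Commute X (A i) ∧ Commute X (B i) := by
  intro g
  induction g with
  | zero =>
    intro A B _ _
    refine ⟨by simp [muMap], 0, ?_, by simp, fun X _ i => i.elim0⟩
    have : muMap n 0 = fun _ => 1 := by funext p; simp [muMap]
    rw [this]
    exact hasFDerivAt_const _ _
  | succ g ih =>
    intro A B hA hB
    obtain ⟨hu, D', hD', ht, hX'⟩ := ih (fun i => A i.succ) (fun i => B i.succ)
      (fun i => hA _) (fun i => hB _)
    obtain ⟨D0, hD0, ht0, hX0⟩ := comm_trace (A 0) (B 0) (hA 0) (hB 0)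
    have hc : IsUnit (A 0 * B 0 * (A 0)⁻¹ * (B 0)⁻¹) :=
      (((hA 0).mul (hB 0)).mul (Matrix.isUnit_nonsing_inv_iff.2 (hA 0))).mul
        (Matrix.isUnit_nonsing_inv_iff.2 (hB 0))
    let P0 : ((Fin (g+1) → Matrix (Fin n) (Fin n) ℂ) × (Fin (g+1) → Matrix (Fin n) (Fin n) ℂ))
        →L[ℂ] (Matrix (Fin n) (Fin n) ℂ × Matrix (Fin n) (Fin n) ℂ) :=
      ((ContinuousLinearMap.proj 0).comp (ContinuousLinearMap.fst ℂ _ _)).prod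
        ((ContinuousLinearMap.proj 0).comp (ContinuousLinearMap.snd ℂ _ _))
    let P1 : ((Fin (g+1) → Matrix (Fin n) (Fin n) ℂ) × (Fin (g+1) → Matrix (Fin n) (Fin n) ℂ))
        →L[ℂ] ((Fin g → Matrix (Fin n) (Fin n) ℂ) × (Fin g → Matrix (Fin n) (Fin n) ℂ)) :=
      (ContinuousLinearMap.pi fun i =>
          (ContinuousLinearMap.proj i.succ).comp (ContinuousLinearMap.fst ℂ _ _)).prod
        (ContinuousLinearMap.pi fun i =>
          (ContinuousLinearMap.proj i.succ).comp (ContinuousLinearMap.snd ℂ _ _))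
    have h0 := HasFDerivAt.comp (A, B) (f := P0) hD0 P0.hasFDerivAt
    have h1 := HasFDerivAt.comp (A, B) (f := P1) hD' P1.hasFDerivAt
    have hm := h0.mul' h1
    have hfun : muMap n (g+1) = fun p => (p.1 0 * p.2 0 * (p.1 0)⁻¹ * (p.2 0)⁻¹) *
      muMap n g (fun i => p.1 i.succ, fun i => p.2 i.succ) := funext (muMap_succ n g)
    rw [muMap_succ]
    dsimp only
    set c := A 0 * B 0 * (A 0)⁻¹ * (B 0)⁻¹ with hcdef
    set m := muMap n g (fun i => A i.succ, fun i => B i.succ) with hmdef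
    refine ⟨hc.mul hu, _, by rw [hfun]; exact hm, ?_⟩
    have hdc := (Matrix.isUnit_iff_isUnit_det c).1 hc
    have hdm := (Matrix.isUnit_iff_isUnit_det m).1 hu
    have key : ∀ x y : Matrix (Fin n) (Fin n) ℂ, (c * y + x * m) * (c * m)⁻¹ =
        x * c⁻¹ + c * (y * m⁻¹) * c⁻¹ := by
      intro x y
      rw [Matrix.mul_inv_rev, add_mul, add_comm]
      congr 1
      · rw [mul_assoc x, ← mul_assoc m, Matrix.mul_nonsing_inv _ hdm, one_mul]
      · simp only [mul_assoc]
    have key' : ∀ v, (c * D' (P1 v) + D0 (P0 v) * m) * (c * m)⁻¹ =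
        D0 (P0 v) * c⁻¹ + c * (D' (P1 v) * m⁻¹) * c⁻¹ := fun v => key _ _
    constructor
    · intro v
      change Matrix.trace ((c * D' (P1 v) + D0 (P0 v) * m) * (c * m)⁻¹) = 0
      rw [key', Matrix.trace_add, ht0, zero_add, mul_assoc, Matrix.trace_mul_comm, mul_assoc,
        Matrix.nonsing_inv_mul _ hdc, mul_one, ht]
    · intro X hX
      have hX2 : ∀ v, Matrix.trace (X * (D0 (P0 v) * c⁻¹)) +
          Matrix.trace (X * (c * (D' (P1 v) * m⁻¹) * c⁻¹)) = 0 := by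
        intro v
        have : Matrix.trace (X * ((c * D' (P1 v) + D0 (P0 v) * m) * (c * m)⁻¹)) = 0 := hX v
        rwa [key', mul_add, Matrix.trace_add] at this
      have r0 : Commute X (A 0) ∧ Commute X (B 0) := by
        refine hX0 X fun v => ?_
        have := hX2 (Fin.cons v.1 0, Fin.cons v.2 0)
        have e0 : P0 (Fin.cons v.1 0, Fin.cons v.2 0) = v := rfl
        have e1 : P1 (Fin.cons v.1 0, Fin.cons v.2 0) = 0 := rfl
        rw [e0, e1] at this
        simpa using this
      have hinv : ∀ Y : Matrix (Fin n) (Fin n) ℂ, IsUnit Y → Commute X Y → Commute X Y⁻¹ := by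
        rintro _ ⟨u, rfl⟩ h
        rw [← Matrix.coe_units_inv]
        exact h.units_inv_right
      have hXc : Commute X c :=
        ((r0.1.mul_right r0.2).mul_right (hinv _ (hA 0) r0.1)).mul_right (hinv _ (hB 0) r0.2)
      have r1 := hX' X (fun v => by
        have := hX2 (Fin.cons 0 v.1, Fin.cons 0 v.2)
        have e0 : P0 (Fin.cons 0 v.1, Fin.cons 0 v.2) = 0 := rfl
        have e1 : P1 (Fin.cons 0 v.1, Fin.cons 0 v.2) = v := rfl
        rw [e0, e1, map_zero, zero_mul, mul_zero, Matrix.trace_zero, zero_add, ← mul_assoc,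
          ← mul_assoc, hXc.eq, mul_assoc c X, mul_assoc, Matrix.trace_mul_comm, mul_assoc,
          Matrix.nonsing_inv_mul _ hdc, mul_one] at this
        exact this)
      exact fun i => Fin.cases r0 r1 i

/-- Schur: something commuting with every `A i`, `B i` is scalar. -/
lemma schur (n g : ℕ) (hn : 1 ≤ n)
    (ζ : ℂ) (hζ : IsPrimitiveRoot ζ n)
    (A B : Fin g → Matrix (Fin n) (Fin n) ℂ)
    (hA : ∀ i, IsUnit (A i)) (hB : ∀ i, IsUnit (B i))
    (hμ : muMap n g (A, B) = ζ • (1 : Matrix (Fin n) (Fin n) ℂ))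
    (X : Matrix (Fin n) (Fin n) ℂ) (hX : ∀ i, Commute X (A i) ∧ Commute X (B i)) :
    ∃ x : ℂ, X = x • 1 := by
  have : Nonempty (Fin n) := ⟨⟨0, hn⟩⟩
  let T : Matrix (Fin n) (Fin n) ℂ →ₐ[ℂ] Module.End ℂ (Fin n → ℂ) := Matrix.toLinAlgEquiv'.toAlgHom
  obtain ⟨x, hx⟩ := Module.End.exists_eigenvalue (T X)
  refine ⟨x, ?_⟩
  let E := Module.End.eigenspace (T X) x
  have inv : ∀ Y : Matrix (Fin n) (Fin n) ℂ, Commute X Y → ∀ v ∈ E, T Y v ∈ E := by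
    intro Y hY v hv
    rw [Module.End.mem_eigenspace_iff] at hv ⊢
    have : T X * T Y = T Y * T X := by rw [← map_mul, ← map_mul, hY.eq]
    calc T X (T Y v) = (T X * T Y) v := rfl
      _ = T Y (T X v) := by rw [this]; rfl
      _ = _ := by rw [hv, map_smul]
  let S := Subalgebra.centralizer ℂ ({X} : Set (Matrix (Fin n) (Fin n) ℂ))
  have memS : ∀ Y, Commute X Y → Y ∈ S := by
    intro Y hY
    rw [Subalgebra.mem_centralizer_iff]
    rintro _ rfl
    exact hY.eq
  have ofS : ∀ Y : S, Commute X Y := fun Y => (Subalgebra.mem_centralizer_iff ℂ).1 Y.2 X rfl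
  let ρ : S →* ℂ :=
    { toFun := fun Y => LinearMap.det ((T Y).restrict (inv Y (ofS Y)))
      map_one' := by
        rw [← LinearMap.det_id (A := ℂ) (M := E)]
        congr 1
        ext v
        simp
      map_mul' := by
        intro Y Z
        rw [← LinearMap.det_comp]
        congr 1
        ext v
        simp }
  have hinv : ∀ Y : Matrix (Fin n) (Fin n) ℂ, IsUnit Y → Commute X Y → Commute X Y⁻¹ := by
    rintro _ ⟨u, rfl⟩ h
    rw [← Matrix.coe_units_inv]
    exact h.units_inv_right
  let cS : Fin g → S := fun i =>
    ⟨A i, memS _ (hX i).1⟩ * ⟨B i, memS _ (hX i).2⟩ * ⟨(A i)⁻¹, memS _ (hinv _ (hA i) (hX i).1)⟩ *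
      ⟨(B i)⁻¹, memS _ (hinv _ (hB i) (hX i).2)⟩
  have ρinv : ∀ (Y : Matrix (Fin n) (Fin n) ℂ) (h : IsUnit Y) (hc : Commute X Y),
      ρ ⟨Y, memS _ hc⟩ * ρ ⟨Y⁻¹, memS _ (hinv _ h hc)⟩ = 1 := by
    intro Y h hc
    rw [← map_mul, ← map_one ρ]
    congr 1
    ext1
    exact Matrix.mul_nonsing_inv _ ((Matrix.isUnit_iff_isUnit_det Y).1 h)
  have ρc : ∀ i, ρ (cS i) = 1 := by
    intro i
    simp only [cS, map_mul]
    have h1 := ρinv _ (hA i) (hX i).1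
    have h2 := ρinv _ (hB i) (hX i).2
    linear_combination (ρ ⟨B i, memS _ (hX i).2⟩ * ρ ⟨(B i)⁻¹, memS _ (hinv _ (hB i) (hX i).2)⟩) * h1 + h2
  have hprod : ((List.ofFn cS).prod : S) = algebraMap ℂ S ζ := by
    apply Subtype.ext
    have : (((List.ofFn cS).prod : S) : Matrix (Fin n) (Fin n) ℂ) = muMap n g (A, B) := by
      change S.val _ = _
      rw [map_list_prod, List.map_ofFn]
      rfl
    rw [this, hμ]
    exact (Algebra.algebraMap_eq_smul_one ζ).symm
  have hone : ρ (algebraMap ℂ S ζ) = 1 := by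
    rw [← hprod, map_list_prod, List.map_ofFn]
    apply List.prod_eq_one
    intro y hy
    rw [List.mem_ofFn] at hy
    obtain ⟨i, rfl⟩ := hy
    exact ρc i
  have hpow : ρ (algebraMap ℂ S ζ) = ζ ^ Module.finrank ℂ E := by
    have : (T (algebraMap ℂ S ζ : S)).restrict (inv _ (ofS _)) = ζ • (LinearMap.id : E →ₗ[ℂ] E) := by
      ext v : 2
      have : T ((algebraMap ℂ S ζ : S) : Matrix (Fin n) (Fin n) ℂ) = algebraMap ℂ _ ζ :=
        T.commutes ζ
      simp [LinearMap.restrict_apply, this]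
    change LinearMap.det ((T (algebraMap ℂ S ζ : S)).restrict (inv _ (ofS _))) = _
    rw [this, LinearMap.det_smul, LinearMap.det_id, mul_one]
  have hdvd : n ∣ Module.finrank ℂ E := hζ.dvd_of_pow_eq_one _ (hpow ▸ hone)
  have hpos : 0 < Module.finrank ℂ E := by
    have : Nontrivial E := Submodule.nontrivial_iff_ne_bot.2 hx
    exact Module.finrank_pos
  have htop : E = ⊤ := by
    apply Submodule.eq_top_of_finrank_eq
    apply le_antisymm (Submodule.finrank_le E)
    simpa using Nat.le_of_dvd hpos hdvd
  have hT : T X = T (x • 1) := by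
    refine LinearMap.ext fun v => ?_
    have hv : v ∈ E := htop ▸ Submodule.mem_top
    rw [Module.End.mem_eigenspace_iff] at hv
    rw [hv, map_smul, map_one]
    rfl
  exact Matrix.toLinAlgEquiv'.injective hT

/-- Let `n ≥ 1`, `g ≥ 1`, and `ζ ∈ ℂ` a primitive `n`-th root of unity.
At a point `s = (A,B)` of the open set of `2g`-tuples of invertible matrices with
`μ(s) = ζ·Iₙ`, the map `μ` is differentiable and the range of its (Fréchet) derivative is
exactly `{M : tr(ζ⁻¹·M) = 0}`, the tangent space of `SL(n,ℂ)` at `ζ·Iₙ`. -/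
theorem statement9 (n g : ℕ) (hn : 1 ≤ n) (hg : 1 ≤ g)
    (ζ : ℂ) (hζ : IsPrimitiveRoot ζ n)
    (A B : Fin g → Matrix (Fin n) (Fin n) ℂ)
    (hA : ∀ i, IsUnit (A i)) (hB : ∀ i, IsUnit (B i))
    (hμ : muMap n g (A, B) = ζ • (1 : Matrix (Fin n) (Fin n) ℂ)) :
    DifferentiableAt ℂ (muMap n g) (A, B) ∧
    Set.range (fderiv ℂ (muMap n g) (A, B))
      = {M : Matrix (Fin n) (Fin n) ℂ | Matrix.trace (ζ⁻¹ • M) = 0} := by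
  obtain ⟨-, D, hD, ht, hX⟩ := mu_main n g A B hA hB
  refine ⟨hD.differentiableAt, ?_⟩
  rw [hD.fderiv]
  have hζ0 : ζ ≠ 0 := hζ.ne_zero (by omega)
  have hinv : (muMap n g (A, B))⁻¹ = ζ⁻¹ • 1 := by
    rw [hμ]
    apply Matrix.inv_eq_right_inv
    simp [smul_smul, hζ0]
  rw [hinv] at ht hX
  simp only [mul_smul_comm, mul_one] at ht hX
  apply Set.Subset.antisymm
  · rintro _ ⟨v, rfl⟩
    exact ht v
  · intro M hM
    by_contra hcon
    have hnot : M ∉ LinearMap.range (D : _ →ₗ[ℂ] Matrix (Fin n) (Fin n) ℂ) := fun ⟨v, hv⟩ => hcon ⟨v, hv⟩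
    obtain ⟨φ, hφ, hle⟩ := Submodule.exists_le_ker_of_notMem hnot
    obtain ⟨X, hφX⟩ := functional_eq_trace φ
    obtain ⟨x, rfl⟩ := schur n g hn ζ hζ A B hA hB hμ X (hX X fun v => by
      rw [Matrix.trace_smul, ← hφX]
      have : φ (D v) = 0 := hle ⟨v, rfl⟩
      rw [this, smul_zero])
    apply hφ
    have hM' : Matrix.trace M = 0 := by
      have : Matrix.trace (ζ⁻¹ • M) = 0 := hM
      simpa [Matrix.trace_smul, hζ0] using this
    rw [hφX]
    simp [hM']
end

section
/- Let g ≥ 1 be an integer. For every odd prime power q, the number of 2g-tuples (A_1,B_1,…,A_g,B_g) ∈ GL(2,F_q)^{2g} satisfying [A_1,B_1][A_2,B_2]⋯[A_g,B_g] = −I_2 equals (|GL(2,F_q)|/(q−1)) · (q−1)^{2g} · [ (q²−1)^{2g−2} + q^{2g−2}(q²−1)^{2g−2} − (1/2)·q^{2g−2}(q−1)^{2g−2} − (1/2)·q^{2g−2}(q+1)^{2g−2} ]. -/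
open scoped MatrixGroups

set_option linter.unusedSectionVars false

namespace S14
variable {F : Type} [Field F] [Fintype F] [DecidableEq F]

/-- rational-valued quadratic character -/
noncomputable def X (a : F) : ℚ := ((quadraticChar F a : ℤ) : ℚ)

lemma X_zero : X (0 : F) = 0 := by simp [X]

lemma X_mul (a b : F) : X (a * b) = X a * X b := by
  rw [X, map_mul]; push_cast; rfl

lemma X_sq {a : F} (ha : a ≠ 0) : X (a ^ 2) = 1 := by
  simp [X, quadraticChar_sq_one' ha]

lemma X_sq' (a : F) : X (a ^ 2) = 1 - (if a = 0 then 1 else 0) := by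
  by_cases h : a = 0
  · simp [h, X_zero]
  · simp [h, X_sq h]

lemma X_mul_self (a : F) : X a * X a = 1 - (if a = 0 then 1 else 0) := by
  rw [← X_mul, ← sq, X_sq']

lemma X_abs (a : F) : X a ≤ 1 := by
  have := X_mul_self a
  split_ifs at this <;> nlinarith [sq_nonneg (X a - 1)]

lemma two_ne (hF : ringChar F ≠ 2) : (2 : F) ≠ 0 := Ring.two_ne_zero hF

lemma four_ne (hF : ringChar F ≠ 2) : (4 : F) ≠ 0 := by
  have : (4 : F) = 2 * 2 := by norm_num
  rw [this]; exact mul_ne_zero (two_ne hF) (two_ne hF)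

lemma sum_X (hF : ringChar F ≠ 2) : ∑ a : F, X a = 0 := by
  have := quadraticChar_sum_zero hF
  simp only [X]; exact_mod_cast this

/-- affine substitution -/
lemma sum_affine (φ : F → ℚ) {k : F} (hk : k ≠ 0) (e : F) :
    ∑ d : F, φ (k * d + e) = ∑ d : F, φ d :=
  Fintype.sum_equiv ((Equiv.mulLeft₀ k hk).trans (Equiv.addRight e)) _ _ (fun d => by simp)

lemma sum_X_affine (hF : ringChar F ≠ 2) {k : F} (hk : k ≠ 0) (e : F) :
    ∑ d : F, X (k * d + e) = 0 := by
  rw [sum_affine X hk e, sum_X hF]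

lemma card_sqrt (hF : ringChar F ≠ 2) (a : F) :
    ∑ x : F, (if x ^ 2 = a then (1 : ℚ) else 0) = 1 + X a := by
  have := quadraticChar_card_sqrts hF a
  rw [Finset.sum_boole, X, ← Int.cast_one, ← Int.cast_add, add_comm, ← this]
  push_cast
  congr 2
  ext x; simp

lemma card_quad (hF : ringChar F ≠ 2) {α : F} (hα : α ≠ 0) (β γ : F) :
    ∑ x : F, (if α * x ^ 2 + β * x + γ = 0 then (1 : ℚ) else 0) = 1 + X (β ^ 2 - 4 * α * γ) := by
  rw [← card_sqrt hF, ← sum_affine (fun x => if x ^ 2 = _ then (1 : ℚ) else 0)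
    (mul_ne_zero (two_ne hF) hα) β]
  refine Finset.sum_congr rfl fun x _ => ?_
  have h4 : (4 : F) * α ≠ 0 := mul_ne_zero (four_ne hF) hα
  have : α * x ^ 2 + β * x + γ = 0 ↔ (2 * α * x + β) ^ 2 = β ^ 2 - 4 * α * γ := by
    rw [← mul_eq_zero_iff_left h4, ← sub_eq_zero (b := β ^ 2 - 4 * α * γ)]
    constructor <;> intro h <;> linear_combination h
  simp only [this]

lemma sum_ite_zero (φ : F → ℚ) : ∑ c : F, (if c = 0 then 0 else φ c) = ∑ c : F, φ c - φ 0 := by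
  have : ∀ c : F, (if c = 0 then 0 else φ c) = φ c - (if c = 0 then φ c else 0) := by
    intro c; split_ifs <;> simp
  simp [this]

lemma sum_X_conic (hF : ringChar F ≠ 2) (D s : F) :
    ∑ c : F, X (c * (c * D + s)) =
      (if s = 0 then (Fintype.card F : ℚ) * X D else 0) - X D := by
  have h1 : ∀ c : F, X (c * (c * D + s)) = if c = 0 then 0 else X (s * c⁻¹ + D) := by
    intro c
    split_ifs with h
    · simp [h, X_zero]
    · rw [show c * (c * D + s) = c ^ 2 * (s * c⁻¹ + D) by field_simp; ring, X_mul, X_sq h, one_mul]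
  have h2 : ∑ c : F, (if c = 0 then 0 else X (s * c⁻¹ + D))
      = ∑ c : F, (if c = 0 then 0 else X (s * c + D)) :=
    Fintype.sum_equiv (Equiv.inv F) _ _ (fun c => by simp)
  simp only [h1]
  rw [h2, sum_ite_zero (fun c => X (s * c + D))]
  by_cases hs : s = 0
  · simp [hs]
  · simp [hs, sum_X_affine hF hs]

lemma sum_X_sq_sub (hF : ringChar F ≠ 2) : ∑ s : F, X (s ^ 2 - 4) = -1 := by
  rw [← sum_affine (fun s => X (s ^ 2 - 4)) one_ne_zero 2]
  have := sum_X_conic hF 1 4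
  simp only [four_ne hF, if_false] at this
  rw [show X (1 : F) = 1 by simp [X]] at this
  rw [show (-1 : ℚ) = 0 - 1 by norm_num, ← this]
  refine Finset.sum_congr rfl fun x _ => ?_
  congr 1; ring

/-- count of zeros of the conic -/
lemma conicM (hF : ringChar F ≠ 2) (τ s : F) :
    ∑ a : F, ∑ c : F, (if a ^ 2 + c * (c + a * τ + s) = 0 then (1 : ℚ) else 0) =
      Fintype.card F + (if s = 0 then (Fintype.card F : ℚ) * X (τ ^ 2 - 4) else 0)
        - X (τ ^ 2 - 4) := by
  rw [Finset.sum_comm]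
  have : ∀ c : F, ∑ a : F, (if a ^ 2 + c * (c + a * τ + s) = 0 then (1 : ℚ) else 0)
      = 1 + X (c * (c * (τ ^ 2 - 4) + (-4 * s))) := by
    intro c
    have := card_quad hF one_ne_zero (c * τ) (c * (c + s))
    rw [show c * (c * (τ ^ 2 - 4) + (-4 * s)) = (c * τ) ^ 2 - 4 * 1 * (c * (c + s)) by ring, ← this]
    refine Finset.sum_congr rfl fun x _ => ?_
    congr 2; ring
  simp only [this, Finset.sum_add_distrib, sum_X_conic hF]
  simp [four_ne hF]
  ring

/-- binary forms -/
lemma binform (hF : ringChar F ≠ 2) (α β γ : F) (h : ¬ (α = 0 ∧ β = 0 ∧ γ = 0)) :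
    ∑ x : F, ∑ y : F, (if α * x ^ 2 + β * x * y + γ * y ^ 2 = 0 then (1 : ℚ) else 0) =
      Fintype.card F + (Fintype.card F - 1) * X (β ^ 2 - 4 * α * γ) := by
  have key : ∀ α β γ : F, α ≠ 0 →
    ∑ y : F, ∑ x : F, (if α * x ^ 2 + β * x * y + γ * y ^ 2 = 0 then (1 : ℚ) else 0) =
      Fintype.card F + (Fintype.card F - 1) * X (β ^ 2 - 4 * α * γ) := by
    intro α β γ hα
    have : ∀ y : F, ∑ x : F, (if α * x ^ 2 + β * x * y + γ * y ^ 2 = 0 then (1 : ℚ) else 0)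
      = 1 + (1 - (if y = 0 then 1 else 0)) * X (β ^ 2 - 4 * α * γ) := by
      intro y
      rw [← X_sq', ← X_mul, show y ^ 2 * (β ^ 2 - 4 * α * γ) = (β * y) ^ 2 - 4 * α * (γ * y ^ 2) by ring,
        ← card_quad hF hα]
      refine Finset.sum_congr rfl fun x _ => ?_
      congr 2; ring
    simp only [this, Finset.sum_add_distrib, ← Finset.sum_mul, Finset.sum_sub_distrib]
    simp
  by_cases hα : α = 0
  · by_cases hγ : γ = 0
    · subst hα hγ
      have hβ : β ≠ 0 := by tauto
      have : ∀ x : F, ∑ y : F, (if (0:F) * x ^ 2 + β * x * y + 0 * y ^ 2 = 0 then (1 : ℚ) else 0) =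
        (if x = 0 then (Fintype.card F : ℚ) - 1 else 0) + 1 := by
        intro x
        by_cases hx : x = 0 <;> simp [hx, hβ]
      simp only [this, Finset.sum_add_distrib]
      simp [X_sq hβ]; ring
    · have := key γ β α hγ
      rw [show β ^ 2 - 4 * α * γ = β ^ 2 - 4 * γ * α by ring, ← this]
      refine Finset.sum_congr rfl fun x _ => Finset.sum_congr rfl fun y _ => ?_
      congr 2; ring
  · rw [Finset.sum_comm, key α β γ hα]

/-- ternary character sum -/
lemma ternX (hF : ringChar F ≠ 2) {κ : F} (hκ : κ ≠ 0) :
    ∑ y : F, ∑ c : F, ∑ d : F, X (y ^ 2 + κ * c * d) =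
      (Fintype.card F : ℚ) * (Fintype.card F - 1) := by
  have : ∀ y c : F, ∑ d : F, X (y ^ 2 + κ * c * d) =
      if c = 0 then (Fintype.card F : ℚ) * (1 - (if y = 0 then 1 else 0)) else 0 := by
    intro y c
    split_ifs with h h2
    · simp [h, h2, X_zero]
    · simp [h, X_sq h2]
    · rw [← sum_X_affine hF (mul_ne_zero hκ h) (y ^ 2)]
      exact Finset.sum_congr rfl fun x _ => by rw [add_comm]
  simp only [this]
  simp [← Finset.mul_sum]


abbrev Mat (F : Type) := Matrix (Fin 2) (Fin 2) F

lemma sumMat (φ : Mat F → ℚ) :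
    ∑ M : Mat F, φ M = ∑ a : F, ∑ b : F, ∑ c : F, ∑ d : F, φ !![a, b; c, d] := by
  let e : Mat F ≃ F × F × F × F :=
    { toFun := fun M => (M 0 0, M 0 1, M 1 0, M 1 1)
      invFun := fun p => !![p.1, p.2.1; p.2.2.1, p.2.2.2]
      left_inv := fun M => (Matrix.eta_fin_two M).symm
      right_inv := fun p => by simp }
  rw [Fintype.sum_equiv e φ (fun p => φ !![p.1, p.2.1; p.2.2.1, p.2.2.2])
    (fun M => by simp only [e, Equiv.coe_fn_mk]; rw [← Matrix.eta_fin_two M])]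
  simp only [Fintype.sum_prod_type]

lemma sumGL (φ : Mat F → ℚ) :
    ∑ g : GL (Fin 2) F, φ (g : Mat F) = ∑ M : Mat F, if M.det = 0 then 0 else φ M := by
  have h : ∀ M : Mat F, (if M.det = 0 then 0 else φ M) = if M.det ≠ 0 then φ M else 0 := by
    intro M; split_ifs <;> simp_all
  simp only [h]
  rw [← Finset.sum_filter]
  refine Finset.sum_bij (fun g _ => (g : Mat F)) ?_ ?_ ?_ ?_
  · intro g _
    simpa using (Matrix.isUnit_iff_isUnit_det _).1 g.isUnit |>.ne_zero
  · intro a _ b _ hab; exact Units.ext hab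
  · intro M hM
    simp only [Finset.mem_filter, Finset.mem_univ, true_and] at hM
    exact ⟨Matrix.GeneralLinearGroup.mkOfDetNeZero M hM, Finset.mem_univ _, rfl⟩
  · intros; rfl

lemma det_ne (g : GL (Fin 2) F) : (g : Mat F).det ≠ 0 :=
  ((Matrix.isUnit_iff_isUnit_det _).1 g.isUnit).ne_zero

/-- scalar matrices -/
def Sc (Y : Mat F) : Prop := Y 0 1 = 0 ∧ Y 1 0 = 0 ∧ Y 0 0 = Y 1 1

instance (Y : Mat F) : Decidable (Sc Y) := by unfold Sc; infer_instance

lemma Sc.eq {Y : Mat F} (h : Sc Y) : Y = Y 0 0 • (1 : Mat F) := by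
  obtain ⟨h1, h2, h3⟩ := h
  ext i j; fin_cases i <;> fin_cases j <;> simp [h1, h2, h3]

lemma Sc_smul (c : F) : Sc (c • (1 : Mat F)) := by simp [Sc]

/-- companion matrix -/
def comp (τ d : F) : Mat F := !![0, -d; 1, τ]

/-- number of intertwiners -/
noncomputable def cnt (X Y : Mat F) : ℚ :=
  ∑ B : GL (Fin 2) F, if (B : Mat F) * X = Y * (B : Mat F) then 1 else 0

/-- discriminant -/
def disc (Y : Mat F) : F := Y.trace ^ 2 - 4 * Y.det

lemma cnt_comp (hF : ringChar F ≠ 2) (Y : Mat F) (hY : ¬ Sc Y) :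
    cnt (comp Y.trace Y.det) Y = (Fintype.card F - 1) * (Fintype.card F - X (disc Y)) := by
  unfold cnt
  rw [sumGL (fun B => if B * comp Y.trace Y.det = Y * B then (1 : ℚ) else 0), sumMat]
  have h : ∀ x b y d : F, (if (!![x, b; y, d] : Mat F).det = 0 then (0 : ℚ) else
      if !![x, b; y, d] * comp Y.trace Y.det = Y * !![x, b; y, d] then (1 : ℚ) else 0) =
      if b = Y 0 0 * x + Y 0 1 * y then (if d = Y 1 0 * x + Y 1 1 * y then
        (1 - if Y 1 0 * x ^ 2 + (Y 1 1 - Y 0 0) * x * y + (- Y 0 1) * y ^ 2 = 0 then (1 : ℚ) else 0)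
         else 0) else 0 := by
    intro x b y d
    have e1 : (!![x, b; y, d] * comp Y.trace Y.det = Y * !![x, b; y, d]) ↔
      (b = Y 0 0 * x + Y 0 1 * y ∧ d = Y 1 0 * x + Y 1 1 * y) := by
      rw [Matrix.eta_fin_two Y]
      simp only [comp, Matrix.trace_fin_two, Matrix.det_fin_two, Matrix.mul_fin_two]
      simp only [Matrix.of_apply, Matrix.cons_val', Matrix.cons_val_zero, Matrix.cons_val_one,
        Matrix.cons_val_fin_one, EmbeddingLike.apply_eq_iff_eq, Matrix.vecCons_inj, and_true]
      constructor
      · rintro ⟨⟨h1, h2⟩, h3, h4⟩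
        exact ⟨by linear_combination h1, by linear_combination h3⟩
      · rintro ⟨rfl, rfl⟩
        refine ⟨⟨?_, ?_⟩, ?_, ?_⟩ <;> ring
    simp only [e1]
    by_cases hb : b = Y 0 0 * x + Y 0 1 * y
    · by_cases hd : d = Y 1 0 * x + Y 1 1 * y
      · simp only [hb, hd, and_self, if_true, Matrix.det_fin_two_of]
        have : x * (Y 1 0 * x + Y 1 1 * y) - (Y 0 0 * x + Y 0 1 * y) * y =
          Y 1 0 * x ^ 2 + (Y 1 1 - Y 0 0) * x * y + (- Y 0 1) * y ^ 2 := by ring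
        rw [this]
        split_ifs <;> simp
      · simp [hd]
    · simp [hb]
  simp only [h]
  have h2 : ∀ x : F, ∑ b : F, ∑ y : F, ∑ d : F, (if b = Y 0 0 * x + Y 0 1 * y then
      (if d = Y 1 0 * x + Y 1 1 * y then
        (1 - if Y 1 0 * x ^ 2 + (Y 1 1 - Y 0 0) * x * y + (- Y 0 1) * y ^ 2 = 0 then (1 : ℚ) else 0)
         else 0) else 0) = ∑ y : F, (1 - if Y 1 0 * x ^ 2 + (Y 1 1 - Y 0 0) * x * y +
           (- Y 0 1) * y ^ 2 = 0 then (1 : ℚ) else 0) := by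
    intro x
    rw [Finset.sum_comm]
    refine Finset.sum_congr rfl fun y _ => ?_
    rw [Finset.sum_comm]
    simp
  simp only [h2, Finset.sum_sub_distrib]
  rw [binform hF]
  · simp only [disc, Matrix.trace_fin_two, Matrix.det_fin_two]
    rw [show (Y 1 1 - Y 0 0) ^ 2 - 4 * Y 1 0 * (- Y 0 1) =
      (Y 0 0 + Y 1 1) ^ 2 - 4 * (Y 0 0 * Y 1 1 - Y 0 1 * Y 1 0) by ring]
    simp; ring
  · rintro ⟨h1, h2, h3⟩
    exact hY ⟨by simpa using h3, h1, by linear_combination -h2⟩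

lemma card_gt_one : (1 : ℚ) < Fintype.card F := by exact_mod_cast Fintype.one_lt_card

lemma exists_comp (hF : ringChar F ≠ 2) (Y : Mat F) (hY : ¬ Sc Y) :
    ∃ B : GL (Fin 2) F, (B : Mat F) * comp Y.trace Y.det = Y * (B : Mat F) := by
  by_contra hcon
  push Not at hcon
  have h := cnt_comp hF Y hY
  have h0 : cnt (comp Y.trace Y.det) Y = 0 := by
    unfold cnt
    exact Finset.sum_eq_zero fun B _ => by simp [hcon B]
  have h1 := card_gt_one (F := F)
  have h2 := X_abs (disc Y)
  rw [h0] at h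
  have : 0 < ((Fintype.card F : ℚ) - 1) * (Fintype.card F - X (disc Y)) :=
    mul_pos (by linarith) (by linarith)
  linarith

lemma trace_of_intertwine {X Y : Mat F} (B : GL (Fin 2) F)
    (h : (B : Mat F) * X = Y * (B : Mat F)) : Y.trace = X.trace ∧ Y.det = X.det ∧ (Sc Y → Sc X) := by
  have hY : Y = (B : Mat F) * X * ((B⁻¹ : GL (Fin 2) F) : Mat F) := by
    rw [h, mul_assoc, ← Units.val_mul]; simp
  have hX : X = ((B⁻¹ : GL (Fin 2) F) : Mat F) * Y * (B : Mat F) := by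
    rw [mul_assoc, ← h, ← mul_assoc, ← Units.val_mul]; simp
  refine ⟨?_, ?_, ?_⟩
  · rw [hY, Matrix.trace_mul_comm, ← mul_assoc, ← Units.val_mul]; simp
  · have := congrArg Matrix.det h
    rw [Matrix.det_mul, Matrix.det_mul, mul_comm] at this
    exact (mul_right_cancel₀ (det_ne B) this).symm
  · intro hs
    rw [hX, hs.eq]
    simp only [mul_smul_comm, mul_one, smul_mul_assoc]
    rw [← Units.val_mul]
    simpa using Sc_smul (F := F) _

lemma cnt_eq (hF : ringChar F ≠ 2) (X' Y : Mat F) (hX : ¬ Sc X') :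
    cnt X' Y = if ¬ Sc Y ∧ Y.trace = X'.trace ∧ Y.det = X'.det then
      ((Fintype.card F : ℚ) - 1) * (Fintype.card F - X (disc X')) else 0 := by
  split_ifs with h
  · obtain ⟨hY, ht, hd⟩ := h
    obtain ⟨P, hP⟩ := exists_comp hF X' hX
    have := cnt_comp hF Y hY
    rw [show disc X' = disc Y by simp [disc, ht, hd], ← this]
    unfold cnt
    refine Fintype.sum_equiv (Equiv.mulRight P) _ _ fun B => ?_
    have : ((B : Mat F) * X' = Y * (B : Mat F)) ↔
      ((B * P : GL (Fin 2) F) : Mat F) * comp Y.trace Y.det = Y * ((B * P : GL (Fin 2) F) : Mat F) := by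
      rw [Units.val_mul, ht, hd, mul_assoc, hP, ← mul_assoc, ← mul_assoc]
      exact (P.mul_left_inj).symm
    exact if_congr this rfl rfl
  · unfold cnt
    refine Finset.sum_eq_zero fun B _ => ?_
    rw [if_neg]
    intro hB
    obtain ⟨h1, h2, h3⟩ := trace_of_intertwine B hB
    exact h ⟨fun hs => hX (h3 hs), h1, h2⟩

/-- number of commutator representations -/
noncomputable def fc (z : GL (Fin 2) F) : ℚ :=
  ∑ A : GL (Fin 2) F, ∑ B : GL (Fin 2) F, if A * B * A⁻¹ * B⁻¹ = z then 1 else 0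

lemma fc_eq (z : GL (Fin 2) F) :
    fc z = ∑ A : GL (Fin 2) F, cnt (A : Mat F) ((A : Mat F) * (z : Mat F)) := by
  unfold fc cnt
  refine Fintype.sum_equiv (Equiv.inv _) _ _ fun A => Finset.sum_congr rfl fun B _ => ?_
  have : (A * B * A⁻¹ * B⁻¹ = z) ↔ ((B : Mat F) * ((A⁻¹ : GL (Fin 2) F) : Mat F) =
    ((A⁻¹ : GL (Fin 2) F) : Mat F) * (z : Mat F) * (B : Mat F)) := by
    rw [← Units.val_mul, ← Units.val_mul, ← Units.val_mul, Units.val_inj]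
    constructor
    · rintro rfl; group
    · intro h
      have h' : z = A * (A⁻¹ * z * B) * B⁻¹ := by group
      rw [h', ← h]; group
  simp only [this, Equiv.inv_apply]

lemma cnt_scalar {X' Y : Mat F} (hX : Sc X') :
    cnt X' Y = if X' = Y then (Fintype.card (GL (Fin 2) F) : ℚ) else 0 := by
  have : ∀ B : GL (Fin 2) F, (B : Mat F) * X' = Y * (B : Mat F) ↔ X' = Y := by
    intro B
    have : (B : Mat F) * X' = X' * (B : Mat F) := by
      rw [hX.eq]; simp
    rw [this]
    exact B.mul_left_inj
  unfold cnt
  simp [this]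

lemma fc_ne (hF : ringChar F ≠ 2) (z : GL (Fin 2) F) (hz : z ≠ 1) (hd : (z : Mat F).det = 1) :
    fc z = (Fintype.card F - 1) * ∑ M : Mat F, (if M.det = 0 then 0 else
      if ¬ Sc M ∧ ¬ Sc (M * (z : Mat F)) ∧ (M * (z : Mat F)).trace = M.trace then
      (Fintype.card F - X (disc M)) else 0) := by
  rw [fc_eq, sumGL (fun A => cnt A (A * (z : Mat F))), Finset.mul_sum]
  refine Finset.sum_congr rfl fun M _ => ?_
  by_cases hM : M.det = 0
  · simp [hM]
  simp only [hM, if_false]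
  by_cases hS : Sc M
  · rw [cnt_scalar hS, if_neg, if_neg (by tauto), mul_zero]
    intro h
    apply hz
    apply Units.ext
    have hu : IsUnit M := (Matrix.isUnit_iff_isUnit_det _).2 (isUnit_iff_ne_zero.2 hM)
    have : M * 1 = M * (z : Mat F) := by rw [mul_one]; exact h
    exact (hu.mul_left_cancel this).symm
  · rw [cnt_eq hF _ _ hS]
    simp only [Matrix.det_mul, hd, mul_one, and_true, hS, not_false_eq_true, true_and]
    split_ifs <;> simp

lemma fc_one (hF : ringChar F ≠ 2) :
    fc (1 : GL (Fin 2) F) = ∑ M : Mat F, (if M.det = 0 then 0 else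
      if Sc M then (Fintype.card (GL (Fin 2) F) : ℚ) else
      (Fintype.card F - 1) * (Fintype.card F - X (disc M))) := by
  rw [fc_eq, sumGL (fun A => cnt A (A * ((1 : GL (Fin 2) F) : Mat F)))]
  refine Finset.sum_congr rfl fun M _ => ?_
  by_cases hM : M.det = 0
  · simp [hM]
  simp only [hM, if_false]
  by_cases hS : Sc M
  · rw [cnt_scalar hS]; simp [hS]
  · rw [cnt_eq hF _ _ hS]; simp [hS]

local notation "q" => (Fintype.card F : ℚ)

lemma sum_ite_and (p : Prop) [Decidable p] (c : ℚ) : (if p then c else 0) = c * (if p then 1 else 0) := by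
  split_ifs <;> simp

/-- values of the count at companion matrices -/
lemma fc_comp (hF : ringChar F ≠ 2) (z : GL (Fin 2) F) (τ : F) (hz : (z : Mat F) = comp τ 1) :
    fc z = (q - 1) ^ 2 * (q ^ 3 - X (τ ^ 2 - 4) - (if τ = 2 then 2 * q ^ 2 else 0)) := by
  have hz1 : z ≠ 1 := by
    rintro rfl
    have := congrFun (congrFun hz 1) 0
    simp [comp] at this
  have h2 := two_ne hF
  rw [fc_ne hF z hz1 (by rw [hz]; simp [comp, Matrix.det_fin_two]), hz, sumMat]
  have step1 : ∀ a b c d : F, (if (!![a, b; c, d] : Mat F).det = 0 then (0 : ℚ) else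
      if ¬ Sc !![a, b; c, d] ∧ ¬ Sc (!![a, b; c, d] * comp τ 1) ∧
        (!![a, b; c, d] * comp τ 1).trace = (!![a, b; c, d] : Mat F).trace then
      (q - X (disc !![a, b; c, d])) else 0) =
      if b = a + c + d - d * τ then
        (q - X ((a - d + 2 * c) ^ 2 + 4 * (2 - τ) * c * d)
          - (if a * d - (a + c + d - d * τ) * c = 0 then (q - 1) + (if d = -a then 1 else 0) else 0)
          - (if τ = 2 then q * (if c = 0 then (if d = a then (1 - if a = 0 then 1 else 0) else 0) else 0) else 0)
          - (if τ = 2 then q * (if d = 0 then (if a = -2 * c then (1 - if c = 0 then 1 else 0) else 0) else 0) else 0))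
      else 0 := by
    intro a b c d
    have etr : (!![a, b; c, d] * comp τ 1).trace = (!![a, b; c, d] : Mat F).trace ↔
        b = a + c + d - d * τ := by
      simp only [comp, Matrix.mul_fin_two, Matrix.trace_fin_two_of]
      constructor <;> intro h <;> linear_combination h
    simp only [etr]
    by_cases hb : b = a + c + d - d * τ
    swap
    · simp [hb]
    simp only [hb, if_true, and_true]
    have eD : disc (!![a, a + c + d - d * τ; c, d] : Mat F)
        = (a - d + 2 * c) ^ 2 + 4 * (2 - τ) * c * d := by
      simp only [disc, Matrix.trace_fin_two_of, Matrix.det_fin_two_of]; ring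
    have eD' : (a - d + 2 * c) ^ 2 + 4 * (2 - τ) * c * d
        = (a + d) ^ 2 - 4 * (a * d - (a + c + d - d * τ) * c) := by ring
    have eS : Sc (!![a, a + c + d - d * τ; c, d] : Mat F) ↔
        (a + c + d - d * τ = 0 ∧ c = 0 ∧ a = d) := by simp [Sc]
    have eS' : Sc ((!![a, a + c + d - d * τ; c, d] : Mat F) * comp τ 1) ↔
        (-a + (a + c + d - d * τ) * τ = 0 ∧ d = 0 ∧ (a + c + d - d * τ) = -c + d * τ) := by
      simp [Sc, comp]
    simp only [eD, eS, eS', Matrix.det_fin_two_of]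
    by_cases hdet : a * d - (a + c + d - d * τ) * c = 0
    · simp only [hdet, if_true]
      rw [eD', hdet, mul_zero, sub_zero, X_sq']
      have e1 : (if c = 0 then (if d = a then (1 - if a = 0 then (1 : ℚ) else 0) else 0) else 0) = 0 := by
        split_ifs with h1 h2 h3
        · simp
        · exfalso; apply h3; subst h1 h2; simpa using hdet
        · rfl
        · rfl
      have e2 : (if τ = 2 then q * (if d = 0 then (if a = -2 * c then (1 - if c = 0 then (1 : ℚ) else 0) else 0) else 0) else 0) = 0 := by
        split_ifs with h0 h1 h2 h3
        · simp
        · exfalso; apply h3; subst h1 h2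
          have : c ^ 2 = 0 := by linear_combination hdet
          exact pow_eq_zero_iff (two_ne_zero) |>.1 this
        · simp
        · simp
        · simp
      rw [e1, e2]
      have e3 : a + d = 0 ↔ d = -a := by
        constructor <;> intro h <;> linear_combination h
      simp only [e3]
      split_ifs <;> ring
    · simp only [hdet, if_false]
      by_cases hτ : τ = 2
      · subst hτ
        simp only [if_true]
        have c1 : (a + c + d - d * 2 = 0 ∧ c = 0 ∧ a = d) ↔ (c = 0 ∧ d = a) := by
          constructor
          · rintro ⟨h1, h2, h3⟩; exact ⟨h2, h3.symm⟩
          · rintro ⟨rfl, rfl⟩; exact ⟨by ring, rfl, rfl⟩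
        have c2 : (-a + (a + c + d - d * 2) * 2 = 0 ∧ d = 0 ∧ (a + c + d - d * 2) = -c + d * 2) ↔
            (d = 0 ∧ a = -2 * c) := by
          constructor
          · rintro ⟨h1, h2, h3⟩; subst h2; exact ⟨rfl, by linear_combination h1⟩
          · rintro ⟨rfl, rfl⟩; exact ⟨by ring, rfl, by ring⟩
        simp only [c1, c2]
        by_cases k1 : c = 0 ∧ d = a
        · obtain ⟨rfl, rfl⟩ := k1
          have hd0 : d ≠ 0 := by rintro rfl; simp at hdet
          simp [hd0, X_zero]
        · by_cases k2 : d = 0 ∧ a = -2 * c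
          · obtain ⟨rfl, rfl⟩ := k2
            have hc0 : c ≠ 0 := by rintro rfl; simp at hdet
            simp [hc0, X_zero]
          · have k1' : (if c = 0 then (if d = a then (1 - if a = 0 then (1 : ℚ) else 0) else 0) else 0) = 0 := by
              rw [← ite_and, if_neg k1]
            have k2' : (if d = 0 then (if a = -2 * c then (1 - if c = 0 then (1 : ℚ) else 0) else 0) else 0) = 0 := by
              rw [← ite_and, if_neg k2]
            rw [k1', k2', if_pos ⟨k1, k2⟩]
            ring
      · simp only [hτ, if_false, sub_zero]
        have hτ' : τ - 2 ≠ 0 := sub_ne_zero.2 hτ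
        rw [if_pos]
        refine ⟨?_, ?_⟩
        · rintro ⟨h1, rfl, rfl⟩
          have : a * (τ - 2) = 0 := by linear_combination -h1
          rcases mul_eq_zero.1 this with h | h
          · subst h; simp at hdet
          · exact hτ' h
        · rintro ⟨h1, rfl, h3⟩
          have h4 : a = -2 * c := by linear_combination h3
          subst h4
          have : c * (τ - 2) = 0 := by linear_combination -h1
          rcases mul_eq_zero.1 this with h | h
          · subst h; simp at hdet
          · exact hτ' h
  simp only [step1]
  have step2 : ∀ (ψ : F → F → F → ℚ), ∑ a : F, ∑ b : F, ∑ c : F, ∑ d : F,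
      (if b = a + c + d - d * τ then ψ a c d else 0) = ∑ a : F, ∑ c : F, ∑ d : F, ψ a c d := by
    intro ψ
    refine Finset.sum_congr rfl fun a _ => ?_
    rw [Finset.sum_comm]
    refine Finset.sum_congr rfl fun c _ => ?_
    rw [Finset.sum_comm]
    simp
  rw [step2]
  simp only [Finset.sum_sub_distrib]
  -- the ternary form
  have t1 : ∑ a : F, ∑ c : F, ∑ d : F, X ((a - d + 2 * c) ^ 2 + 4 * (2 - τ) * c * d) =
      if τ = 2 then q ^ 2 * (q - 1) else q * (q - 1) := by
    have : ∑ a : F, ∑ c : F, ∑ d : F, X ((a - d + 2 * c) ^ 2 + 4 * (2 - τ) * c * d)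
       = ∑ a : F, ∑ c : F, ∑ d : F, X (a ^ 2 + 4 * (2 - τ) * c * d) := by
      rw [Finset.sum_comm, Finset.sum_comm (γ := F) (f := fun a c => ∑ d : F, X (a ^ 2 + 4 * (2 - τ) * c * d))]
      refine Finset.sum_congr rfl fun c _ => ?_
      rw [Finset.sum_comm, Finset.sum_comm (γ := F) (f := fun a d => X (a ^ 2 + 4 * (2 - τ) * c * d))]
      refine Finset.sum_congr rfl fun d _ => ?_
      rw [← sum_affine (fun a => X (a ^ 2 + 4 * (2 - τ) * c * d)) one_ne_zero (-d + 2 * c)]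
      refine Finset.sum_congr rfl fun a _ => ?_
      congr 1; ring
    rw [this]
    split_ifs with h
    · subst h
      simp [X_sq']; ring
    · rw [ternX hF]
      exact mul_ne_zero (four_ne hF) (sub_ne_zero.2 (Ne.symm h))
  have t2 : ∑ a : F, ∑ c : F, ∑ d : F, (if a * d - (a + c + d - d * τ) * c = 0 then
      (q - 1) + (if d = -a then 1 else 0) else 0) =
      (q - 1) * (if τ = 2 then 2 * q ^ 2 - q else q ^ 2) + (q + (q - 1) * X (τ ^ 2 - 4)) := by
    have e : ∀ a c d : F, (if a * d - (a + c + d - d * τ) * c = 0 then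
      (q - 1) + (if d = -a then 1 else 0) else 0) =
      (q - 1) * (if a * d - (a + c + d - d * τ) * c = 0 then 1 else 0)
       + (if d = -a then (if a ^ 2 + c * (c + a * τ + 0) = 0 then 1 else 0) else 0) := by
      intro a c d
      by_cases hd : d = -a
      · subst hd
        have : a * -a - (a + c + -a - -a * τ) * c = 0 ↔ a ^ 2 + c * (c + a * τ + 0) = 0 := by
          constructor <;> intro h <;> linear_combination -h
        simp only [this]
        split_ifs <;> simp
      · simp [hd]
    simp only [e, Finset.sum_add_distrib, ← Finset.mul_sum]
    congr 1
    · congr 1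
      have r : ∑ a : F, ∑ c : F, ∑ d : F, (if a * d - (a + c + d - d * τ) * c = 0 then (1 : ℚ) else 0)
        = ∑ c : F, ∑ d : F, ∑ a : F, (if d * a + (τ - 2) * c ^ 2 = 0 then (1 : ℚ) else 0) := by
        rw [Finset.sum_comm]
        refine Finset.sum_congr rfl fun c _ => ?_
        rw [Finset.sum_comm, ← sum_affine _ one_ne_zero c]
        refine Finset.sum_congr rfl fun d _ => ?_
        rw [← sum_affine (fun a => if d * a + (τ - 2) * c ^ 2 = 0 then (1 : ℚ) else 0) one_ne_zero ((τ - 1) * c)]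
        refine Finset.sum_congr rfl fun a _ => ?_
        congr 2; ring
      rw [r]
      have r2 : ∀ c d : F, ∑ a : F, (if d * a + (τ - 2) * c ^ 2 = 0 then (1 : ℚ) else 0) =
          1 + (if d = 0 then ((if τ = 2 then q else if c = 0 then q else 0) - 1) else 0) := by
        intro c d
        by_cases hd : d = 0
        · subst hd
          by_cases hτ : τ = 2
          · simp [hτ]
          · have hτ' : τ - 2 ≠ 0 := sub_ne_zero.2 hτ
            by_cases hc : c = 0 <;> simp [hτ, hc, hτ']
        · have := sum_affine (fun a : F => if a = 0 then (1 : ℚ) else 0) hd ((τ - 2) * c ^ 2)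
          rw [this]; simp [hd]
      simp only [r2, Finset.sum_add_distrib]
      split_ifs <;> simp <;> ring
    · simp only [Finset.sum_ite_eq', Finset.mem_univ, if_true]
      rw [conicM hF]
      simp; ring
  have t3 : ∑ a : F, ∑ c : F, ∑ d : F, (if τ = 2 then q * (if c = 0 then (if d = a then (1 - if a = 0 then 1 else 0) else 0) else 0) else 0)
      = if τ = 2 then q * (q - 1) else 0 := by
    split_ifs with h
    · simp only [← Finset.mul_sum]
      simp
    · simp
  have t4 : ∑ a : F, ∑ c : F, ∑ d : F, (if τ = 2 then q * (if d = 0 then (if a = -2 * c then (1 - if c = 0 then 1 else 0) else 0) else 0) else 0)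
      = if τ = 2 then q * (q - 1) else 0 := by
    split_ifs with h
    · rw [Finset.sum_comm]
      simp only [← Finset.mul_sum]
      simp
    · simp
  rw [t1, t2, t3, t4]
  simp only [Finset.sum_const, Finset.card_univ, nsmul_eq_mul]
  by_cases h : τ = 2
  · subst h
    have : X ((2 : F) ^ 2 - 4) = 0 := by rw [show (2 : F) ^ 2 - 4 = 0 by ring, X_zero]
    simp [this]; ring
  · simp [h]; ring

lemma nilcount : ∑ a : F, ∑ b : F, ∑ c : F, (if a ^ 2 + b * c = 0 then (1 : ℚ) else 0) = q ^ 2 := by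
    have : ∀ a b : F, ∑ c : F, (if a ^ 2 + b * c = 0 then (1 : ℚ) else 0) =
      1 + if b = 0 then (if a = 0 then q else 0) - 1 else 0 := by
      intro a b
      by_cases hb : b = 0
      · subst hb; by_cases ha : a = 0 <;> simp [ha]
      · have := sum_affine (fun a : F => if a = 0 then (1 : ℚ) else 0) hb (a ^ 2)
        simp only [add_comm] at this ⊢
        rw [this]; simp [hb]
    simp only [this, Finset.sum_add_distrib]
    simp; ring

lemma neg_one_val : ((-1 : GL (Fin 2) F) : Mat F) = -1 := by simp

lemma fc_neg_one (hF : ringChar F ≠ 2) :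
    fc (-1 : GL (Fin 2) F) = (q - 1) ^ 2 * (q ^ 3 - q) := by
  have h2 := two_ne hF
  have hz1 : (-1 : GL (Fin 2) F) ≠ 1 := by
    intro h
    have := congrArg (fun g : GL (Fin 2) F => (g : Mat F) 0 0) h
    simp at this
    exact h2 (by linear_combination -this)
  rw [fc_ne hF _ hz1 (by simp [Matrix.det_fin_two]), sumMat, neg_one_val]
  have step1 : ∀ a b c d : F, (if (!![a, b; c, d] : Mat F).det = 0 then (0 : ℚ) else
      if ¬ Sc !![a, b; c, d] ∧ ¬ Sc (!![a, b; c, d] * -1) ∧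
        (!![a, b; c, d] * -1 : Mat F).trace = (!![a, b; c, d] : Mat F).trace then
      (q - X (disc !![a, b; c, d])) else 0) =
      if d = -a then (q - X (a ^ 2 + 1 * b * c) - q * if a ^ 2 + b * c = 0 then 1 else 0)
      else 0 := by
    intro a b c d
    have etr : (!![a, b; c, d] * -1 : Mat F).trace = (!![a, b; c, d] : Mat F).trace ↔ d = -a := by
      simp only [mul_neg, mul_one, Matrix.trace_neg, Matrix.trace_fin_two_of]
      constructor
      · intro h
        have : 2 * (d + a) = 0 := by linear_combination -h
        rcases mul_eq_zero.1 this with h | h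
        · exact absurd h h2
        · linear_combination h
      · intro h; linear_combination -2 * h
    simp only [etr]
    by_cases hd : d = -a
    swap
    · simp [hd]
    subst hd
    have eD : disc (!![a, b; c, -a] : Mat F) = 2 ^ 2 * (a ^ 2 + 1 * b * c) := by
      simp only [disc, Matrix.trace_fin_two_of, Matrix.det_fin_two_of]; ring
    rw [eD, X_mul, X_sq h2, Matrix.det_fin_two_of]
    have e0 : a * -a - b * c = 0 ↔ a ^ 2 + b * c = 0 := by
      constructor <;> intro h <;> linear_combination -h
    simp only [e0]
    by_cases hdet : a ^ 2 + b * c = 0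
    · simp [hdet, X_zero]
    · have hns : ¬ (b = 0 ∧ c = 0 ∧ a = -a) := by
        rintro ⟨rfl, rfl, h⟩
        have : 2 * a = 0 := by linear_combination h
        rcases mul_eq_zero.1 this with h | h
        · exact h2 h
        · subst h; simp at hdet
      have hns' : ¬ (b = 0 ∧ c = 0 ∧ -a = a) := by
        rintro ⟨h1, h2, h⟩; exact hns ⟨h1, h2, h.symm⟩
      simp [Sc, hdet]
      intro h; exfalso
      tauto
  simp only [step1]
  simp only [Finset.sum_ite_eq', Finset.mem_univ, if_true, Finset.sum_sub_distrib, ternX hF one_ne_zero,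
    ← Finset.mul_sum]
  rw [nilcount]
  simp; ring

lemma rot4 (φ : F → F → F → F → ℚ) :
    ∑ a : F, ∑ b : F, ∑ c : F, ∑ d : F, φ a b c d = ∑ d : F, ∑ b : F, ∑ c : F, ∑ a : F, φ a b c d := by
  rw [Finset.sum_comm, Finset.sum_comm (γ := F) (f := fun d b => ∑ c : F, ∑ a : F, φ a b c d)]
  refine Finset.sum_congr rfl fun b _ => ?_
  rw [Finset.sum_comm, Finset.sum_comm (γ := F) (f := fun d c => ∑ a : F, φ a b c d)]
  refine Finset.sum_congr rfl fun c _ => ?_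
  rw [Finset.sum_comm]

lemma rot4' (φ : F → F → F → F → ℚ) :
    ∑ d : F, ∑ b : F, ∑ c : F, ∑ a : F, φ a b c d = ∑ d : F, ∑ a : F, ∑ b : F, ∑ c : F, φ a b c d := by
  refine Finset.sum_congr rfl fun d _ => ?_
  rw [Finset.sum_comm (s := (Finset.univ : Finset F)) (f := fun a b => ∑ c : F, φ a b c d)]
  refine Finset.sum_congr rfl fun b _ => ?_
  rw [Finset.sum_comm]

lemma cardGL : (Fintype.card (GL (Fin 2) F) : ℚ) = (q ^ 2 - 1) * (q ^ 2 - q) := by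
  have h := Matrix.card_GL_field (𝔽 := F) 2
  rw [Nat.card_eq_fintype_card] at h
  have h1 : 1 ≤ Fintype.card F := Fintype.card_pos
  have h2 : 1 ≤ Fintype.card F ^ 2 := Nat.one_le_pow _ _ h1
  have h3 : Fintype.card F ≤ Fintype.card F ^ 2 := Nat.le_self_pow (by norm_num) _
  rw [h, Fin.prod_univ_two]
  simp only [Fin.val_zero, Fin.val_one, pow_zero, pow_one]
  push_cast [h2, h3]
  ring

lemma fc_one' (hF : ringChar F ≠ 2) :
    fc (1 : GL (Fin 2) F) = (q ^ 2 - 1) * (q ^ 2 - q) * (q ^ 2 - 1) := by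
  rw [fc_one hF, sumMat]
  set N : ℚ := (Fintype.card (GL (Fin 2) F) : ℚ) with hN
  have step1 : ∀ a b c d : F, (if (!![a, b; c, d] : Mat F).det = 0 then (0 : ℚ) else
      if Sc !![a, b; c, d] then N else (q - 1) * (q - X (disc !![a, b; c, d]))) =
      (q - 1) * (q - X ((a - d) ^ 2 + 4 * b * c)
        - ((q - 1) * (if a * d - b * c = 0 then 1 else 0)
          + (if d = -a then (if a ^ 2 + b * c = 0 then 1 else 0) else 0)))
      + (N - (q - 1) * q) * (if d = a then (if c = 0 then (if b = 0 then
          (1 - if a = 0 then 1 else 0) else 0) else 0) else 0) := by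
    intro a b c d
    have eD : disc (!![a, b; c, d] : Mat F) = (a - d) ^ 2 + 4 * b * c := by
      simp only [disc, Matrix.trace_fin_two_of, Matrix.det_fin_two_of]; ring
    have eD' : (a - d) ^ 2 + 4 * b * c = (a + d) ^ 2 - 4 * (a * d - b * c) := by ring
    have eS : Sc (!![a, b; c, d] : Mat F) ↔ (b = 0 ∧ c = 0 ∧ a = d) := by simp [Sc]
    simp only [eD, eS, Matrix.det_fin_two_of]
    have e4 : (if d = -a then (if a ^ 2 + b * c = 0 then (1 : ℚ) else 0) else 0) =
      if a * d - b * c = 0 then (if d = -a then 1 else 0) else 0 := by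
      by_cases hd : d = -a
      · subst hd
        have e0 : a * -a - b * c = 0 ↔ a ^ 2 + b * c = 0 := by
          constructor <;> intro h <;> linear_combination -h
        simp only [e0, if_true]
      · simp [hd]
    rw [e4]
    by_cases hdet : a * d - b * c = 0
    · simp only [hdet, if_true]
      rw [eD', hdet, mul_zero, sub_zero, X_sq']
      have e1 : (if d = a then (if c = 0 then (if b = 0 then
          (1 - if a = 0 then (1 : ℚ) else 0) else 0) else 0) else 0) = 0 := by
        split_ifs with h1 h2 h3 h4
        · simp
        · exfalso; apply h4; subst h1 h2 h3; simpa using hdet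
        all_goals rfl
      have e3 : a + d = 0 ↔ d = -a := by
        constructor <;> intro h <;> linear_combination h
      rw [e1]
      simp only [e3]
      split_ifs <;> ring
    · simp only [hdet, if_false]
      by_cases k : b = 0 ∧ c = 0 ∧ a = d
      · obtain ⟨rfl, rfl, rfl⟩ := k
        have : a ≠ 0 := by rintro rfl; simp at hdet
        simp [this, X_zero]
      · have k' : (if d = a then (if c = 0 then (if b = 0 then
          (1 - if a = 0 then (1 : ℚ) else 0) else 0) else 0) else 0) = 0 := by
          rw [← ite_and, ← ite_and, if_neg]
          rintro ⟨⟨h1, h2⟩, h3⟩; exact k ⟨h3, h2, h1.symm⟩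
        rw [k', if_neg k]; ring
  simp only [step1, Finset.sum_add_distrib, ← Finset.mul_sum, Finset.sum_sub_distrib]
  have t1 : ∑ a : F, ∑ b : F, ∑ c : F, ∑ d : F, X ((a - d) ^ 2 + 4 * b * c) = q * (q * (q - 1)) := by
    rw [rot4 (fun a b c d => X ((a - d) ^ 2 + 4 * b * c)),
      rot4' (fun a b c d => X ((a - d) ^ 2 + 4 * b * c))]
    have : ∀ d : F, ∑ a : F, ∑ b : F, ∑ c : F, X ((a - d) ^ 2 + 4 * b * c) = q * (q - 1) := by
      intro d
      have := sum_affine (fun a => ∑ b : F, ∑ c : F, X (a ^ 2 + 4 * b * c)) one_ne_zero (-d)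
      rw [ternX hF (four_ne hF)] at this
      rw [← this]
      simp only [one_mul, sub_eq_add_neg]
    simp [this]
  have t2 : ∑ a : F, ∑ b : F, ∑ c : F, ∑ d : F, (if a * d - b * c = 0 then (1 : ℚ) else 0)
      = q ^ 3 + q ^ 2 - q := by
    have : ∀ a b c : F, ∑ d : F, (if a * d - b * c = 0 then (1 : ℚ) else 0) =
       1 + if a = 0 then (if b = 0 then q else if c = 0 then q else 0) - 1 else 0 := by
      intro a b c
      by_cases ha : a = 0
      · subst ha; by_cases hb : b = 0 <;> by_cases hc : c = 0 <;> simp [hb, hc]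
      · have := sum_affine (fun a : F => if a = 0 then (1 : ℚ) else 0) ha (-(b * c))
        simp only [← sub_eq_add_neg] at this
        rw [this]; simp [ha]
    simp only [this, Finset.sum_add_distrib]
    have h2 : ∀ a b : F, ∑ c : F, (if a = 0 then (if b = 0 then q else if c = 0 then q else 0) - 1 else 0)
      = if a = 0 then (if b = 0 then q ^ 2 - q else 0) else 0 := by
      intro a b
      by_cases ha : a = 0
      · by_cases hb : b = 0
        · simp [ha, hb]; ring
        · simp [ha, hb]
      · simp [ha]
    simp only [h2]
    simp; ring
  have t4 : ∑ a : F, ∑ b : F, ∑ c : F, ∑ d : F, (if d = a then (if c = 0 then (if b = 0 then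
          (1 - if a = 0 then (1 : ℚ) else 0) else 0) else 0) else 0) = q - 1 := by
    simp
  rw [t1, t2, t4]
  simp only [Finset.sum_ite_eq', Finset.mem_univ, if_true, nilcount]
  rw [hN, cardGL]
  simp; ring

/-- class functions -/
def CI (u : GL (Fin 2) F → ℚ) : Prop := ∀ g z, u (g * z * g⁻¹) = u z

lemma conj_td (g z : GL (Fin 2) F) :
    ((g * z * g⁻¹ : GL (Fin 2) F) : Mat F).trace = (z : Mat F).trace ∧
    ((g * z * g⁻¹ : GL (Fin 2) F) : Mat F).det = (z : Mat F).det := by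
  have := trace_of_intertwine (X := (z : Mat F)) (Y := ((g * z * g⁻¹ : GL (Fin 2) F) : Mat F)) g
    (by rw [← Units.val_mul, ← Units.val_mul]; simp)
  exact ⟨this.1, this.2.1⟩

lemma class_ext (hF : ringChar F ≠ 2) {u v : GL (Fin 2) F → ℚ} (hu : CI u) (hv : CI v)
    (h0 : ∀ z : GL (Fin 2) F, (z : Mat F).det ≠ 1 → u z = v z)
    (h1 : u 1 = v 1) (h2 : u (-1) = v (-1))
    (h3 : ∀ (z : GL (Fin 2) F) (τ : F), (z : Mat F) = comp τ 1 → u z = v z) (z : GL (Fin 2) F) :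
    u z = v z := by
  by_cases hd : (z : Mat F).det = 1
  swap
  · exact h0 z hd
  by_cases hs : Sc (z : Mat F)
  · have he := hs.eq
    set c := (z : Mat F) 0 0
    rw [he, Matrix.det_smul] at hd
    simp only [Fintype.card_fin, Matrix.det_one, mul_one] at hd
    rcases mul_self_eq_one_iff.1 ((sq c).symm.trans hd) with h | h
    · have : z = 1 := Units.ext (by rw [he, h]; simp)
      rw [this, h1]
    · have : z = -1 := Units.ext (by rw [he, h]; simp)
      rw [this, h2]
  · obtain ⟨B, hB⟩ := exists_comp hF _ hs
    rw [hd] at hB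
    have : (((B⁻¹ * z * B : GL (Fin 2) F)) : Mat F) = comp (z : Mat F).trace 1 := by
      rw [Units.val_mul, Units.val_mul, mul_assoc, ← hB, ← mul_assoc, ← Units.val_mul]; simp
    have hz : z = B * (B⁻¹ * z * B) * B⁻¹ := by group
    rw [hz, hu, hv, h3 _ _ this]

lemma fc_CI : CI (fc (F := F)) := by
  intro g z
  unfold fc
  refine (Fintype.sum_equiv (MulAut.conj g).toEquiv _ _ fun A =>
    Fintype.sum_equiv (MulAut.conj g).toEquiv _ _ fun B => ?_).symm
  have : A * B * A⁻¹ * B⁻¹ = z ↔ (g * A * g⁻¹) * (g * B * g⁻¹) * (g * A * g⁻¹)⁻¹ * (g * B * g⁻¹)⁻¹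
      = g * z * g⁻¹ := by
    rw [show (g * A * g⁻¹) * (g * B * g⁻¹) * (g * A * g⁻¹)⁻¹ * (g * B * g⁻¹)⁻¹ =
      g * (A * B * A⁻¹ * B⁻¹) * g⁻¹ by group]
    simp
  exact if_congr this rfl rfl

noncomputable def jj (z : GL (Fin 2) F) : ℚ := if (z : Mat F).det = 1 then 1 else 0
noncomputable def ww (z : GL (Fin 2) F) : ℚ :=
  if (z : Mat F).det = 1 ∧ (z : Mat F).trace = 2 then 1 else 0
noncomputable def dd (z : GL (Fin 2) F) : ℚ := if z = 1 then 1 else 0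
noncomputable def hh (z : GL (Fin 2) F) : ℚ :=
  if (z : Mat F).det = 1 then X ((z : Mat F).trace ^ 2 - 4) + q * dd z + q * dd (-z) else 0

lemma jj_CI : CI (jj (F := F)) := fun g z => by simp only [jj, (conj_td g z).2]
lemma ww_CI : CI (ww (F := F)) := fun g z => by simp only [ww, (conj_td g z).2, (conj_td g z).1]
lemma dd_CI : CI (dd (F := F)) := fun g z => by
  simp only [dd]; congr 1; simp
lemma hh_CI : CI (hh (F := F)) := fun g z => by
  have : -(g * z * g⁻¹) = g * (-z) * g⁻¹ := by simp
  simp only [hh, (conj_td g z).2, (conj_td g z).1, this, dd_CI g z, dd_CI g (-z)]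

/-- convolution with `ww` -/
noncomputable def Wc (φ : GL (Fin 2) F → ℚ) (z : GL (Fin 2) F) : ℚ := ∑ t, ww t * φ (t⁻¹ * z)

lemma Wc_CI {φ : GL (Fin 2) F → ℚ} (h : CI φ) : CI (Wc φ) := by
  intro g z
  unfold Wc
  refine (Fintype.sum_equiv (MulAut.conj g).toEquiv _ _ fun t => ?_).symm
  have : (g * t * g⁻¹)⁻¹ * (g * z * g⁻¹) = g * (t⁻¹ * z) * g⁻¹ := by group
  simp only [MulEquiv.toEquiv_eq_coe, EquivLike.coe_coe, MulAut.conj_apply, this, h g, ww_CI g]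

lemma inv_td (t : GL (Fin 2) F) (h : (t : Mat F).det = 1) :
    ((t⁻¹ : GL (Fin 2) F) : Mat F).det = 1 ∧
    ((t⁻¹ : GL (Fin 2) F) : Mat F).trace = (t : Mat F).trace := by
  rw [Matrix.coe_units_inv, Matrix.inv_def, h]
  simp [Matrix.adjugate_fin_two, Matrix.trace_fin_two, Matrix.det_fin_two] at h ⊢
  exact ⟨by linear_combination h, by ring⟩

lemma ww_inv (t : GL (Fin 2) F) : ww t⁻¹ = ww t := by
  unfold ww
  congr 1
  by_cases h : (t : Mat F).det = 1
  · simp only [(inv_td t h).1, (inv_td t h).2, h]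
  · have : ((t⁻¹ : GL (Fin 2) F) : Mat F).det ≠ 1 := by
      intro h'
      have := (inv_td _ h').1
      rw [inv_inv] at this; exact h this
    simp only [h, this]
    simp

lemma Wc_eq (φ : GL (Fin 2) F → ℚ) (z : GL (Fin 2) F) : Wc φ z = ∑ t, ww t * φ (t * z) := by
  unfold Wc
  exact Fintype.sum_equiv (Equiv.inv _) _ _ fun t => by simp [ww_inv]

lemma W_sum (hF : ringChar F ≠ 2) (z : GL (Fin 2) F) (τ : F) (hz : (z : Mat F) = comp τ 1)
    (ψ : F → ℚ) : ∑ t : GL (Fin 2) F, ww t * ψ ((t * z : GL (Fin 2) F) : Mat F).trace =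
      (q - X (τ ^ 2 - 4)) * ∑ s : F, ψ s + q * X (τ ^ 2 - 4) * ψ τ := by
  have h0 : ∀ t : GL (Fin 2) F, ww t * ψ ((t * z : GL (Fin 2) F) : Mat F).trace =
    (fun M : Mat F => (if M.det = 1 ∧ M.trace = 2 then 1 else 0) * ψ (M * comp τ 1).trace) (t : Mat F) := by
    intro t; simp only [ww, Units.val_mul, hz]
  simp only [h0]
  rw [sumGL (fun M : Mat F => (if M.det = 1 ∧ M.trace = 2 then (1 : ℚ) else 0) * ψ (M * comp τ 1).trace),
    sumMat]
  have h1 : ∀ a b c d : F, (if (!![a, b; c, d] : Mat F).det = 0 then (0 : ℚ) else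
     (if (!![a, b; c, d] : Mat F).det = 1 ∧ (!![a, b; c, d] : Mat F).trace = 2 then 1 else 0) *
       ψ (!![a, b; c, d] * comp τ 1).trace) =
      if d = 2 - a then (if (a - 1) ^ 2 + b * c = 0 then ψ (b - c + (2 - a) * τ) else 0) else 0 := by
    intro a b c d
    have etr : (!![a, b; c, d] * comp τ 1).trace = b - c + d * τ := by
      simp only [comp, Matrix.mul_fin_two, Matrix.trace_fin_two_of]; ring
    have et : (!![a, b; c, d] : Mat F).trace = 2 ↔ d = 2 - a := by
      rw [Matrix.trace_fin_two_of]
      constructor <;> intro h <;> linear_combination h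
    simp only [etr, et, Matrix.det_fin_two_of]
    by_cases hd : d = 2 - a
    · subst hd
      have e : a * (2 - a) - b * c = 1 ↔ (a - 1) ^ 2 + b * c = 0 := by
        constructor <;> intro h <;> linear_combination -h
      simp only [e, and_true, if_true]
      by_cases k : (a - 1) ^ 2 + b * c = 0
      · have := e.2 k
        simp [k, this]
      · simp [k]
    · simp [hd]
  simp only [h1, Finset.sum_ite_eq', Finset.mem_univ, if_true]
  rw [← sum_affine _ one_ne_zero 1]
  have h2 : ∀ a : F, ∑ b : F, ∑ c : F, (if (1 * a + 1 - 1) ^ 2 + b * c = 0 then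
       ψ (b - c + (2 - (1 * a + 1)) * τ) else 0) =
      ∑ s : F, ∑ c : F, ψ (1 * s + τ) * (if a ^ 2 + c * (c + a * τ + s) = 0 then 1 else 0) := by
    intro a
    rw [Finset.sum_comm, Finset.sum_comm (γ := F) (f := fun s c => ψ (1 * s + τ) * _)]
    refine Finset.sum_congr rfl fun c _ => ?_
    rw [← sum_affine _ one_ne_zero (c + a * τ)]
    refine Finset.sum_congr rfl fun s _ => ?_
    rw [mul_ite, mul_one, mul_zero]
    have e : (1 * a + 1 - 1) ^ 2 + (1 * s + (c + a * τ)) * c = a ^ 2 + c * (c + a * τ + s) := by ring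
    rw [e]
    congr 2; ring
  simp only [h2]
  rw [Finset.sum_comm]
  simp only [← Finset.mul_sum, conicM hF]
  rw [← sum_affine ψ one_ne_zero τ, Finset.mul_sum]
  have h3 : ∀ s : F, ψ (1 * s + τ) * (q + (if s = 0 then q * X (τ ^ 2 - 4) else 0) - X (τ ^ 2 - 4)) =
     (q - X (τ ^ 2 - 4)) * ψ (1 * s + τ) + (if s = 0 then q * X (τ ^ 2 - 4) * ψ τ else 0) := by
    intro s
    split_ifs with h
    · subst h; rw [mul_zero, zero_add]; ring
    · ring
  simp only [h3, Finset.sum_add_distrib]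
  simp

lemma ww_det {t : GL (Fin 2) F} (h : ww t ≠ 0) : (t : Mat F).det = 1 ∧ (t : Mat F).trace = 2 := by
  unfold ww at h; by_contra hc; simp [hc] at h

lemma sum_ww (hF : ringChar F ≠ 2) : ∑ t : GL (Fin 2) F, ww t = q ^ 2 := by
  have hd : (comp (0 : F) 1).det ≠ 0 := by simp [comp, Matrix.det_fin_two]
  have := W_sum hF (Matrix.GeneralLinearGroup.mkOfDetNeZero (comp (0 : F) 1) hd) 0 rfl (fun _ => 1)
  simp only [mul_one, Finset.sum_const, Finset.card_univ, nsmul_eq_mul] at this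
  rw [this]; ring

lemma det_mul' (t z : GL (Fin 2) F) (h : (t : Mat F).det = 1) :
    ((t * z : GL (Fin 2) F) : Mat F).det = (z : Mat F).det := by
  rw [Units.val_mul, Matrix.det_mul, h, one_mul]

lemma Wc_jj (hF : ringChar F ≠ 2) (z : GL (Fin 2) F) : Wc jj z = q ^ 2 * jj z := by
  rw [Wc_eq, ← sum_ww hF, Finset.sum_mul]
  refine Finset.sum_congr rfl fun t _ => ?_
  by_cases h : ww t = 0
  · simp [h]
  · simp only [jj, det_mul' t z (ww_det h).1]

lemma det_neg' (z : GL (Fin 2) F) : ((-z : GL (Fin 2) F) : Mat F).det = (z : Mat F).det := by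
  simp [Matrix.det_neg]

lemma trace_neg' (z : GL (Fin 2) F) : ((-z : GL (Fin 2) F) : Mat F).trace = -(z : Mat F).trace := by
  simp

lemma dd_det {z : GL (Fin 2) F} (h : (z : Mat F).det ≠ 1) : dd z = 0 := by
  unfold dd; rw [if_neg]; rintro rfl; simp at h

lemma neg_one_ne (hF : ringChar F ≠ 2) : (-1 : GL (Fin 2) F) ≠ 1 := by
  intro h
  have := congrArg (fun g : GL (Fin 2) F => (g : Mat F) 0 0) h
  simp at this
  exact two_ne hF (by linear_combination -this)

lemma neg_two_ne (hF : ringChar F ≠ 2) : (-2 : F) ≠ 2 := by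
  intro h; exact four_ne hF (by linear_combination -h)

lemma comp_dd {z : GL (Fin 2) F} {τ : F} (hz : (z : Mat F) = comp τ 1) : dd z = 0 ∧ dd (-z) = 0 := by
  have h10 : (z : Mat F) 1 0 = 1 := by rw [hz]; simp [comp]
  constructor
  · unfold dd; rw [if_neg]; rintro rfl; simp at h10
  · unfold dd; rw [if_neg]; intro h
    have : z = -1 := by rw [← h]; simp
    subst this; simp at h10

lemma comp_td {z : GL (Fin 2) F} {τ : F} (hz : (z : Mat F) = comp τ 1) :
    (z : Mat F).det = 1 ∧ (z : Mat F).trace = τ := by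
  rw [hz]; simp [comp, Matrix.det_fin_two, Matrix.trace_fin_two]

lemma jj_one : jj (1 : GL (Fin 2) F) = 1 := by simp [jj]
lemma jj_neg_one : jj (-1 : GL (Fin 2) F) = 1 := by simp [jj, Matrix.det_fin_two]
lemma dd_one : dd (1 : GL (Fin 2) F) = 1 := by simp [dd]
lemma dd_neg_one (hF : ringChar F ≠ 2) : dd (-1 : GL (Fin 2) F) = 0 := by simp [dd, neg_one_ne hF]
lemma td_one : ((1 : GL (Fin 2) F) : Mat F).det = 1 ∧ ((1 : GL (Fin 2) F) : Mat F).trace = 2 := by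
  simp
lemma td_neg_one : ((-1 : GL (Fin 2) F) : Mat F).det = 1 ∧ ((-1 : GL (Fin 2) F) : Mat F).trace = -2 := by
  simp [Matrix.det_fin_two]
lemma ww_one : ww (1 : GL (Fin 2) F) = 1 := by simp [ww]
lemma ww_neg_one (hF : ringChar F ≠ 2) : ww (-1 : GL (Fin 2) F) = 0 := by
  simp only [ww, td_neg_one, neg_two_ne hF]; simp
lemma X_two : X ((2 : F) ^ 2 - 4) = 0 := by rw [show (2 : F) ^ 2 - 4 = 0 by ring, X_zero]
lemma X_neg_two : X ((-2 : F) ^ 2 - 4) = 0 := by rw [show (-2 : F) ^ 2 - 4 = 0 by ring, X_zero]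
lemma hh_one (hF : ringChar F ≠ 2) : hh (1 : GL (Fin 2) F) = q := by
  simp only [hh, td_one, X_two, dd_one, dd_neg_one hF]; simp
lemma hh_neg_one (hF : ringChar F ≠ 2) : hh (-1 : GL (Fin 2) F) = q := by
  simp only [hh, td_neg_one, X_neg_two, dd_neg_one hF, neg_neg, dd_one]; simp

lemma Wc_ww (hF : ringChar F ≠ 2) (z : GL (Fin 2) F) :
    Wc ww z = q * jj z - hh z + q ^ 2 * dd z := by
  refine class_ext hF (Wc_CI ww_CI) (v := fun z => q * jj z - hh z + q ^ 2 * dd z) ?_ ?_ ?_ ?_ ?_ z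
  · intro g z; simp only [jj_CI g z, hh_CI g z, dd_CI g z]
  · intro z hz
    simp only [jj, hh, hz, if_false, dd_det hz, Wc_eq]
    simp only [mul_zero, sub_zero, add_zero]
    refine Finset.sum_eq_zero fun t _ => ?_
    by_cases h : ww t = 0
    · simp [h]
    · have := det_mul' t z (ww_det h).1
      simp only [ww, this, hz]; simp
  · simp only [jj_one, hh_one hF, dd_one, Wc_eq, mul_one]
    have : ∀ t : GL (Fin 2) F, ww t * ww t = ww t := by intro t; unfold ww; split_ifs <;> simp
    simp only [this, sum_ww hF]; ring
  · simp only [jj_neg_one, hh_neg_one hF, dd_neg_one hF, Wc_eq]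
    have : ∀ t : GL (Fin 2) F, ww t * ww (t * -1) = 0 := by
      intro t
      by_cases h : ww t = 0
      · simp [h]
      · have h1 := ww_det h
        have : ww (t * -1) = 0 := by
          unfold ww
          rw [if_neg]
          rintro ⟨_, h2⟩
          rw [show t * -1 = -t by simp, trace_neg', h1.2] at h2
          exact neg_two_ne hF h2
        rw [this, mul_zero]
    simp only [this]; simp
  · intro z τ hz
    have h1 : ∀ t : GL (Fin 2) F, ww t * ww (t * z) =
        ww t * (fun s : F => if s = 2 then (1 : ℚ) else 0) ((t * z : GL (Fin 2) F) : Mat F).trace := by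
      intro t
      by_cases h : ww t = 0
      · simp [h]
      · have := det_mul' t z (ww_det h).1
        rw [(comp_td hz).1] at this
        congr 1
        simp only [ww, this, true_and]
    rw [Wc_eq, Finset.sum_congr rfl fun t _ => h1 t,
      W_sum hF z τ hz (fun s : F => if s = 2 then (1 : ℚ) else 0)]
    simp only [jj, hh, comp_td hz, comp_dd hz]
    by_cases h : τ = 2
    · subst h; simp [X_two]
    · simp [h]

lemma sum_ww_eq_one (z : GL (Fin 2) F) : ∑ t, ww t * dd (t * z) = ww z := by
  rw [Finset.sum_eq_single z⁻¹]
  · simp [dd_one, ww_inv]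
  · intro t _ ht
    have : dd (t * z) = 0 := by
      unfold dd; rw [if_neg]; intro h; exact ht (eq_inv_of_mul_eq_one_left h)
    rw [this, mul_zero]
  · simp

lemma Wc_hh (hF : ringChar F ≠ 2) (z : GL (Fin 2) F) : Wc hh z = hh z := by
  have main : ∀ z : GL (Fin 2) F, (z : Mat F).det = 1 → Wc hh z =
      ∑ t : GL (Fin 2) F, ww t * (fun s => X (s ^ 2 - 4)) ((t * z : GL (Fin 2) F) : Mat F).trace
       + q * ww z + q * ww (-z) := by
    intro z hz
    rw [Wc_eq, ← sum_ww_eq_one z, ← sum_ww_eq_one (-z), Finset.mul_sum, Finset.mul_sum,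
      ← Finset.sum_add_distrib, ← Finset.sum_add_distrib]
    refine Finset.sum_congr rfl fun t _ => ?_
    by_cases h : ww t = 0
    · simp [h]
    · have := det_mul' t z (ww_det h).1
      rw [hz] at this
      simp only [hh, this, if_true]
      rw [show t * -z = -(t * z) by simp]; ring
  refine class_ext hF (Wc_CI hh_CI) hh_CI ?_ ?_ ?_ ?_ z
  · intro z hz
    simp only [hh, hz, if_false, Wc_eq]
    refine Finset.sum_eq_zero fun t _ => ?_
    by_cases h : ww t = 0
    · simp [h]
    · have := det_mul' t z (ww_det h).1
      simp only [this, hz]; simp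
  · rw [main 1 td_one.1, ww_one, ww_neg_one hF, hh_one hF]
    rw [Finset.sum_eq_zero]
    · simp
    · intro t _
      by_cases h : ww t = 0
      · simp [h]
      · simp only [mul_one, (ww_det h).2, X_two, mul_zero]
  · rw [main _ td_neg_one.1, neg_neg, ww_one, ww_neg_one hF, hh_neg_one hF]
    rw [Finset.sum_eq_zero]
    · simp
    · intro t _
      by_cases h : ww t = 0
      · simp [h]
      · rw [show t * -1 = -t by simp]
        simp only [trace_neg', (ww_det h).2, X_neg_two, mul_zero]
  · intro z τ hz
    rw [main z (comp_td hz).1, W_sum hF z τ hz (fun s => X (s ^ 2 - 4)), sum_X_sq_sub hF]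
    have hm : X (τ ^ 2 - 4) * X (τ ^ 2 - 4) = 1 - (ww z + ww (-z)) := by
      rw [X_mul_self]
      simp only [ww, det_neg', trace_neg', comp_td hz, true_and]
      by_cases h1 : τ = 2
      · subst h1
        rw [if_pos (by ring), if_pos rfl, if_neg (neg_two_ne hF)]; ring
      · by_cases h2 : τ = -2
        · subst h2
          rw [if_pos (by ring), if_neg (neg_two_ne hF), if_pos (by ring)]; ring
        · have h3 : τ ^ 2 - 4 ≠ 0 := by
            intro h
            have : (τ - 2) * (τ + 2) = 0 := by linear_combination h
            rcases mul_eq_zero.1 this with h | h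
            · exact h1 (by linear_combination h)
            · exact h2 (by linear_combination h)
          rw [if_neg h3, if_neg h1, if_neg]
          · ring
          · intro h; exact h2 (by linear_combination -h)
    simp only [hh, comp_td hz, if_true, comp_dd hz]
    linear_combination q * hm

lemma fc_formula (hF : ringChar F ≠ 2) (z : GL (Fin 2) F) :
    fc z = (q - 1) ^ 2 * (q ^ 3 * jj z - hh z - 2 * q ^ 2 * ww z + q ^ 2 * (q ^ 2 + 1) * dd z) := by
  refine class_ext hF fc_CI (v := fun z => (q - 1) ^ 2 * (q ^ 3 * jj z - hh z - 2 * q ^ 2 * ww z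
    + q ^ 2 * (q ^ 2 + 1) * dd z)) ?_ ?_ ?_ ?_ ?_ z
  · intro g z; simp only [jj_CI g z, hh_CI g z, dd_CI g z, ww_CI g z]
  · intro z hz
    simp only [jj, hh, ww, hz, if_false, dd_det hz, false_and]
    simp only [mul_zero, sub_zero, add_zero]
    unfold fc
    refine Finset.sum_eq_zero fun A _ => Finset.sum_eq_zero fun B _ => ?_
    rw [if_neg]
    rintro rfl
    apply hz
    have hA := det_ne A
    have hB := det_ne B
    simp
    field_simp
  · simp only [fc_one' hF, jj_one, hh_one hF, ww_one, dd_one]; ring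
  · simp only [fc_neg_one hF, jj_neg_one, hh_neg_one hF, ww_neg_one hF, dd_neg_one hF]; ring
  · intro z τ hz
    rw [fc_comp hF z τ hz]
    simp only [jj, hh, ww, comp_td hz, comp_dd hz, true_and, if_true]
    split_ifs <;> ring

section algebra
variable {R : Type} [Ring R] [Algebra ℚ R]

lemma alg_eig {J W H f x : R} {Q μ : ℚ} (hJW : J * W = Q ^ 2 • J)
    (hWW : W * W = Q • J - H + Q ^ 2 • (1 : R))
    (hf : f = (Q - 1) ^ 2 • (Q ^ 3 • J - H - (2 * Q ^ 2) • W + (Q ^ 2 * (Q ^ 2 + 1)) • (1 : R)))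
    (hx : W * x = μ • x) (hμ : μ ≠ Q ^ 2) (n : ℕ) :
    f ^ n * x = (((Q - 1) * (μ - Q ^ 2)) ^ 2) ^ n • x := by
  have hJx : J * x = 0 := by
    have h1 : J * W * x = J * (W * x) := mul_assoc _ _ _
    rw [hJW, hx, mul_smul_comm, smul_mul_assoc] at h1
    have h2 : (Q ^ 2 - μ) • (J * x) = 0 := by rw [sub_smul, h1, sub_self]
    exact (smul_eq_zero.1 h2).resolve_left (sub_ne_zero.2 hμ.symm)
  have hHx : H * x = (Q ^ 2 - μ ^ 2) • x := by
    have h1 : W * W * x = W * (W * x) := mul_assoc _ _ _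
    rw [hWW, hx, mul_smul_comm, hx] at h1
    simp only [add_mul, sub_mul, smul_mul_assoc, hJx, one_mul] at h1
    have : H * x = Q ^ 2 • x - μ • μ • x := by rw [← h1]; simp
    rw [this]; module
  have hfx : f * x = ((Q - 1) * (μ - Q ^ 2)) ^ 2 • x := by
    rw [hf]
    simp only [add_mul, sub_mul, smul_mul_assoc, hJx, one_mul, hHx, hx]
    module
  induction n with
  | zero => simp
  | succ n ih => rw [pow_succ, mul_assoc, hfx, mul_smul_comm, ih, smul_smul, pow_succ]; ring_nf

lemma alg_main {J W H f : R} {Q N : ℚ} (hQ : 1 < Q) (hWJ : W * J = Q ^ 2 • J) (hJW : J * W = Q ^ 2 • J)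
    (hWH : W * H = H)
    (hWW : W * W = Q • J - H + Q ^ 2 • (1 : R))
    (hf : f = (Q - 1) ^ 2 • (Q ^ 3 • J - H - (2 * Q ^ 2) • W + (Q ^ 2 * (Q ^ 2 + 1)) • (1 : R)))
    (hfJ : f * J = N ^ 2 • J) (n : ℕ) :
    (Q * (Q ^ 2 - 1)) • f ^ n = (N ^ 2) ^ n • J
      + (((Q - 1) * (1 - Q ^ 2)) ^ 2) ^ n • (Q • H)
      + (((Q - 1) * (Q - Q ^ 2)) ^ 2) ^ n • (((Q + 1) / 2) • (-J - H + (Q - 1) • (W + Q • (1 : R))))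
      + (((Q - 1) * (-Q - Q ^ 2)) ^ 2) ^ n •
        (((Q - 1) / 2) • (J - H - (Q + 1) • W + (Q * (Q + 1)) • (1 : R))) := by
  have e1 := alg_eig (x := H) (μ := 1) hJW hWW hf (by rw [hWH, one_smul]) (by nlinarith) n
  have e2 := alg_eig (x := -J - H + (Q - 1) • (W + Q • (1 : R))) (μ := Q) hJW hWW hf
    (by
      simp only [mul_add, mul_sub, mul_neg, mul_smul_comm, hWJ, hWH, hWW, mul_one]
      module) (by nlinarith) n
  have e3 := alg_eig (x := J - H - (Q + 1) • W + (Q * (Q + 1)) • (1 : R)) (μ := -Q) hJW hWW hf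
    (by
      simp only [mul_add, mul_sub, mul_neg, mul_smul_comm, hWJ, hWH, hWW, mul_one]
      module) (by nlinarith) n
  have e0 : f ^ n * J = (N ^ 2) ^ n • J := by
    induction n with
    | zero => simp
    | succ n ih =>
      rw [pow_succ, mul_assoc, hfJ, mul_smul_comm, ih, smul_smul, pow_succ]
      · ring_nf
      · exact alg_eig (x := H) (μ := 1) hJW hWW hf (by rw [hWH, one_smul]) (by nlinarith) n
      · exact alg_eig (x := -J - H + (Q - 1) • (W + Q • (1 : R))) (μ := Q) hJW hWW hf
          (by
            simp only [mul_add, mul_sub, mul_neg, mul_smul_comm, hWJ, hWH, hWW, mul_one]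
            module) (by nlinarith) n
      · exact alg_eig (x := J - H - (Q + 1) • W + (Q * (Q + 1)) • (1 : R)) (μ := -Q) hJW hWW hf
          (by
            simp only [mul_add, mul_sub, mul_neg, mul_smul_comm, hWJ, hWH, hWW, mul_one]
            module) (by nlinarith) n
  have hone : (Q * (Q ^ 2 - 1)) • (1 : R) = J + Q • H
      + ((Q + 1) / 2) • (-J - H + (Q - 1) • (W + Q • (1 : R)))
      + ((Q - 1) / 2) • (J - H - (Q + 1) • W + (Q * (Q + 1)) • (1 : R)) := by
    module
  have : (Q * (Q ^ 2 - 1)) • f ^ n = f ^ n * ((Q * (Q ^ 2 - 1)) • (1 : R)) := by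
    rw [mul_smul_comm, mul_one]
  rw [this, hone]
  rw [mul_add, mul_add, mul_add, mul_smul_comm Q, mul_smul_comm ((Q + 1) / 2),
    mul_smul_comm ((Q - 1) / 2), e0, e1, e2, e3]
  congr 1
  · congr 1
    · congr 1
      rw [smul_comm]
    · rw [smul_comm]
  · rw [smul_comm]

end algebra

/-- group algebra element from its coefficients -/
noncomputable def mk (φ : GL (Fin 2) F → ℚ) : MonoidAlgebra ℚ (GL (Fin 2) F) :=
  MonoidAlgebra.ofCoeff (Finsupp.equivFunOnFinite.symm φ)

lemma mk_coeff (φ : GL (Fin 2) F → ℚ) (z : GL (Fin 2) F) : (mk φ).coeff z = φ z := rfl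

lemma mk_mul (φ ψ : GL (Fin 2) F → ℚ) (z : GL (Fin 2) F) :
    (mk φ * mk ψ).coeff z = ∑ t, φ t * ψ (t⁻¹ * z) := by
  rw [MonoidAlgebra.coeff_mul_apply_left, Finsupp.sum_fintype _ _ (by simp)]
  rfl

lemma mk_mul' (φ ψ : GL (Fin 2) F → ℚ) (z : GL (Fin 2) F) :
    (mk φ * mk ψ).coeff z = ∑ t, φ (z * t⁻¹) * ψ t := by
  rw [MonoidAlgebra.coeff_mul_apply_right, Finsupp.sum_fintype _ _ (by simp)]
  rfl

lemma mk_dd : mk (dd (F := F)) = 1 := by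
  ext z
  rw [mk_coeff, MonoidAlgebra.one_def, MonoidAlgebra.coeff_single, Finsupp.single_apply, dd]
  simp only [eq_comm]

lemma mk_fc : mk (fc (F := F)) = ∑ A : GL (Fin 2) F, ∑ B : GL (Fin 2) F,
    MonoidAlgebra.single (A * B * A⁻¹ * B⁻¹) (1 : ℚ) := by
  ext z
  rw [mk_coeff, fc]
  simp only [MonoidAlgebra.coeff_sum, Finsupp.finsetSum_apply, MonoidAlgebra.coeff_single,
    Finsupp.single_apply]

lemma fc_pow (n : ℕ) : mk (fc (F := F)) ^ n =
    ∑ p : (Fin n → GL (Fin 2) F) × (Fin n → GL (Fin 2) F),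
      MonoidAlgebra.single ((List.ofFn fun i => p.1 i * p.2 i * (p.1 i)⁻¹ * (p.2 i)⁻¹).prod) (1 : ℚ) := by
  induction n with
  | zero => simp [MonoidAlgebra.one_def]
  | succ n ih =>
    rw [pow_succ', ih, mk_fc, ← Fintype.sum_prod_type', Finset.sum_mul_sum, ← Fintype.sum_prod_type']
    refine Fintype.sum_equiv ((Equiv.prodProdProdComm _ _ _ _).trans
      (Equiv.prodCongr (Fin.consEquiv (fun _ => GL (Fin 2) F)) (Fin.consEquiv (fun _ => GL (Fin 2) F)))) _ _ ?_
    rintro ⟨⟨A, B⟩, p1, p2⟩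
    rw [MonoidAlgebra.single_mul_single]
    simp [List.ofFn_succ, Fin.consEquiv]

lemma fc_det (hF : ringChar F ≠ 2) {t : GL (Fin 2) F} (h : fc t ≠ 0) : (t : Mat F).det = 1 := by
  by_contra hd
  apply h
  rw [fc_formula hF]
  simp [jj, hh, ww, hd, dd_det hd]

lemma sum_fc : ∑ t : GL (Fin 2) F, fc t = (Fintype.card (GL (Fin 2) F) : ℚ) ^ 2 := by
  unfold fc
  rw [Finset.sum_comm]
  have : ∀ A : GL (Fin 2) F, ∑ t : GL (Fin 2) F, ∑ B : GL (Fin 2) F,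
      (if A * B * A⁻¹ * B⁻¹ = t then (1 : ℚ) else 0) = Fintype.card (GL (Fin 2) F) := by
    intro A
    rw [Finset.sum_comm]
    simp
  simp only [this]
  simp; ring

lemma count_formula (hF : ringChar F ≠ 2) (n : ℕ) :
    (q * (q ^ 2 - 1)) * ((mk (fc (F := F)) ^ n).coeff (-1)) =
      (((q ^ 2 - 1) * (q ^ 2 - q)) ^ 2) ^ n
      + (((q - 1) * (1 - q ^ 2)) ^ 2) ^ n * q ^ 2
      - (((q - 1) * (q - q ^ 2)) ^ 2) ^ n * ((q + 1) ^ 2 / 2)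
      - (((q - 1) * (-q - q ^ 2)) ^ 2) ^ n * ((q - 1) ^ 2 / 2) := by
  have h := alg_main (J := mk (jj (F := F))) (W := mk ww) (H := mk hh) (f := mk fc) (Q := q)
    (N := (q ^ 2 - 1) * (q ^ 2 - q)) card_gt_one
    (by ext z; rw [mk_mul]; exact Wc_jj hF z)
    (by
      ext z; rw [mk_mul', MonoidAlgebra.coeff_smul_apply, mk_coeff, ← sum_ww hF, smul_eq_mul, Finset.sum_mul]
      refine Finset.sum_congr rfl fun t _ => ?_
      by_cases h : ww t = 0
      · simp [h]
      · have h1 := (ww_det (t := t⁻¹) (by rwa [ww_inv])).1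
        simp only [jj]
        rw [Units.val_mul, Matrix.det_mul, h1, mul_one, mul_comm])
    (by ext z; rw [mk_mul]; exact Wc_hh hF z)
    (by
      ext z
      rw [mk_mul, ← mk_dd]
      exact Wc_ww hF z)
    (by
      ext z
      rw [← mk_dd]
      exact fc_formula hF z)
    (by
      ext z
      rw [mk_mul, MonoidAlgebra.coeff_smul_apply, mk_coeff, ← cardGL, ← sum_fc, smul_eq_mul, Finset.sum_mul]
      refine Finset.sum_congr rfl fun t _ => ?_
      by_cases h : fc t = 0
      · simp [h]
      · have h1 := (inv_td t (fc_det hF h)).1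
        simp only [jj, det_mul' _ z h1])
    n
  rw [← mk_dd] at h
  have h' := congrArg (fun x : MonoidAlgebra ℚ (GL (Fin 2) F) => x.coeff (-1)) h
  simp only [MonoidAlgebra.coeff_add, MonoidAlgebra.coeff_sub, MonoidAlgebra.coeff_neg,
    MonoidAlgebra.coeff_smul, Finsupp.add_apply, Finsupp.sub_apply, Finsupp.neg_apply,
    Finsupp.smul_apply, smul_eq_mul, mk_coeff, jj_neg_one, hh_neg_one hF, ww_neg_one hF,
    dd_neg_one hF] at h'
  rw [h']
  ring

end S14

/-- For `g ≥ 1` and every finite field `F_q` of odd cardinality `q`,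
the number of `2g`-tuples in `GL(2,F_q)^{2g}` with `[A₁,B₁]⋯[A_g,B_g] = −I₂` equals
`(|GL(2,F_q)|/(q−1)) · (q−1)^{2g} · [ (q²−1)^{2g−2} + q^{2g−2}(q²−1)^{2g−2}
  − ½·q^{2g−2}(q−1)^{2g−2} − ½·q^{2g−2}(q+1)^{2g−2} ]`. -/
theorem statement14 (g : ℕ) (hg : 1 ≤ g) (F : Type) [Field F] [Fintype F]
    (hodd : Odd (Fintype.card F)) :
    (Nat.card {p : (Fin g → GL (Fin 2) F) × (Fin g → GL (Fin 2) F) //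
        (↑((List.ofFn fun i => p.1 i * p.2 i * (p.1 i)⁻¹ * (p.2 i)⁻¹).prod) :
          Matrix (Fin 2) (Fin 2) F) = (-1 : Matrix (Fin 2) (Fin 2) F)} : ℚ)
      = (Nat.card (GL (Fin 2) F) : ℚ) / ((Fintype.card F : ℚ) - 1)
          * ((Fintype.card F : ℚ) - 1) ^ (2 * g)
          * (((Fintype.card F : ℚ) ^ 2 - 1) ^ (2 * g - 2)
            + (Fintype.card F : ℚ) ^ (2 * g - 2) * ((Fintype.card F : ℚ) ^ 2 - 1) ^ (2 * g - 2)
            - (1 / 2) * (Fintype.card F : ℚ) ^ (2 * g - 2) * ((Fintype.card F : ℚ) - 1) ^ (2 * g - 2)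
            - (1 / 2) * (Fintype.card F : ℚ) ^ (2 * g - 2) * ((Fintype.card F : ℚ) + 1) ^ (2 * g - 2)) := by
  classical
  have hF : ringChar F ≠ 2 := by
    intro h
    have := FiniteField.even_card_of_char_two h
    rcases hodd with ⟨k, hk⟩
    omega
  have hcount : (Nat.card {p : (Fin g → GL (Fin 2) F) × (Fin g → GL (Fin 2) F) //
        (↑((List.ofFn fun i => p.1 i * p.2 i * (p.1 i)⁻¹ * (p.2 i)⁻¹).prod) :
          Matrix (Fin 2) (Fin 2) F) = (-1 : Matrix (Fin 2) (Fin 2) F)} : ℚ) =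
      (S14.mk (S14.fc (F := F)) ^ g).coeff (-1) := by
    rw [S14.fc_pow, Nat.card_eq_fintype_card, Fintype.card_subtype]
    simp only [MonoidAlgebra.coeff_sum, Finsupp.finsetSum_apply, MonoidAlgebra.coeff_single,
      Finsupp.single_apply]
    rw [Finset.sum_boole]
    congr 2
    ext p
    simp only [Finset.mem_filter, Finset.mem_univ, true_and]
    rw [← Units.val_inj, S14.neg_one_val]
  have key := S14.count_formula hF g
  rw [← hcount] at key
  rw [Nat.card_eq_fintype_card (α := GL (Fin 2) F), S14.cardGL]
  have hq := S14.card_gt_one (F := F)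
  set c : ℚ := (Nat.card _ : ℚ)
  set Q : ℚ := (Fintype.card F : ℚ)
  obtain ⟨m, rfl⟩ : ∃ m, g = m + 1 := ⟨g - 1, by omega⟩
  have h1 : Q - 1 ≠ 0 := by linarith
  have h2 : Q * (Q ^ 2 - 1) ≠ 0 := by
    apply mul_ne_zero <;> nlinarith
  apply mul_left_cancel₀ h2
  rw [key]
  rw [show 2 * (m + 1) - 2 = 2 * m by omega, show 2 * (m + 1) = 2 * m + 2 by ring]
  rw [show (Q ^ 2 - 1) * (Q ^ 2 - Q) / (Q - 1) = Q * (Q ^ 2 - 1) by field_simp]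
  rw [show (Q ^ 2 - 1) * (Q ^ 2 - Q) = Q * (Q - 1) * (Q ^ 2 - 1) by ring,
    show (Q - 1) * (1 - Q ^ 2) = - ((Q - 1) * (Q ^ 2 - 1)) by ring,
    show (Q - 1) * (Q - Q ^ 2) = - (Q * (Q - 1) * (Q - 1)) by ring,
    show (Q - 1) * (-Q - Q ^ 2) = - (Q * (Q - 1) * (Q + 1)) by ring]
  simp only [← pow_mul, show 2 * (m + 1) = 2 * m + 2 by ring]
  simp only [pow_add, mul_pow, (even_two_mul m).neg_pow, even_two.neg_pow]
  ring
end
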